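/- Let $k$ be a field of characteristic zero and let $C$ be a geometrically irreducible quasi-projective curve over $k$, that is, a reduced, geometrically irreducible, quasi-projective $k$-scheme of dimension one. Let $\mathcal L$ be an invertible sheaf on $C$ and let $V\subset H^0(C,\mathcal L)$ be a $k$-linear subspace of finite dimension $v$. For an integer $r\ge 0$ let $K$ be the function field of $C\times_k\cdots\times_k C$ ($r$ factors), put $C_K=C\times_k K$, and let $x_1,\ldots,x_r$ be the generic set of $r$ closed points of $C$: $x_i$ is the $K$-rational point of $C_K$ given by the composite of the generic point $\operatorname{Spec}K\to C\times_k\cdots\times_k C$ with the $i$-th projection to $C$. Let $m_1,\ldots,m_r$ be positive integers and let $D=m_1x_1+\cdots+m_rx_r$ be the divisor on $C_K$, i.e. the closed subscheme of $C_K$ with ideal sheaf $\prod_i \mathcal I_{x_i}^{m_i}$. Then the canonical evaluation map $$V\otimes_k K\longrightarrow H^0(C_K,\mathcal O_D\otimes\mathcal L),$$ the $K$-linear extension of the restriction of sections $V\to H^0(C_K,\mathcal O_D\otimes\mathcal L)$, has maximal rank, i.e. it is injective or surjective. -/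

import Mathlib

open CategoryTheory CategoryTheory.Limits AlgebraicGeometry TopologicalSpace

open scoped TensorProduct

universe u

namespace GenericDivisor

/-! ### Quasi-projective schemes over a field, invertible sheaves -/

section Projective

attribute [local instance] MvPolynomial.gradedAlgebra

/-- Projective space `ℙⁿ` over `k`, as the homogeneous spectrum of `k[X₀, …, Xₙ]`. -/
noncomputable abbrev projSpace (k : Type u) [Field k] (n : ℕ) : Scheme.{u} :=
  Proj (MvPolynomial.homogeneousSubmodule (Fin (n + 1)) k)

/-- The structure morphism `ℙⁿ ⟶ Spec k`. -/
noncomputable def projSpaceStr (k : Type u) [Field k] (n : ℕ) :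
    projSpace k n ⟶ Spec (.of k) :=
  Proj.toSpecZero (MvPolynomial.homogeneousSubmodule (Fin (n + 1)) k) ≫
    Spec.map (CommRingCat.ofHom
      (algebraMap k (MvPolynomial.homogeneousSubmodule (Fin (n + 1)) k 0)))

end Projective

/-- A `k`-scheme is quasi-projective if it is isomorphic over `k` to a locally closed subscheme
of some projective space `ℙⁿ` over `k`. -/
def IsQuasiProjective {k : Type u} [Field k] {C : Scheme.{u}} (f : C ⟶ Spec (.of k)) : Prop :=
  ∃ (n : ℕ) (i : C ⟶ projSpace k n), IsImmersion i ∧ i ≫ projSpaceStr k n = f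

/-- An `𝒪_X`-module is invertible if it is locally isomorphic to `𝒪_X`. -/
def IsInvertibleSheaf {X : Scheme.{u}} (L : X.Modules) : Prop :=
  ∀ x : X, ∃ U : X.Opens, x ∈ U ∧
    Nonempty (L.restrict U.ι ≅ (SheafOfModules.unit U.toScheme.ringCatSheaf : U.toScheme.Modules))

/-! ### Global sections as modules over the base, and their pullback -/

/-- The module `H⁰(X, M)` of global sections of an `𝒪_X`-module `M` on a scheme `p : X ⟶ Spec R`,
as a module over the base ring `R`. -/
def GlobalSections {R : Type u} [CommRing R] {X : Scheme.{u}} (_p : X ⟶ Spec (.of R))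
    (M : X.Modules) : Type u :=
  Γ(M, ⊤)

section GlobalSections

variable {R : Type u} [CommRing R] {X : Scheme.{u}} (p : X ⟶ Spec (.of R)) (M : X.Modules)

/-- The ring homomorphism `R ⟶ Γ(X, 𝒪_X)` of a scheme `p : X ⟶ Spec R`. -/
noncomputable def baseToSections : R →+* Γ(X, ⊤) :=
  ((Scheme.ΓSpecIso (.of R)).inv ≫ p.appTop).hom

noncomputable instance : AddCommGroup (GlobalSections p M) :=
  inferInstanceAs (AddCommGroup Γ(M, ⊤))

noncomputable instance : Module Γ(X, ⊤) (GlobalSections p M) :=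
  inferInstanceAs (Module Γ(X, ⊤) Γ(M, ⊤))

noncomputable instance : Module R (GlobalSections p M) :=
  Module.compHom _ (baseToSections p)

variable {S : Type u} [CommRing S] {Y : Scheme.{u}} (q : Y ⟶ Spec (.of S))

/-- Pullback of sections `H⁰(X, M) → H⁰(Y, g^*M)` along `g : Y ⟶ X`: the component on global
sections of the unit `M ⟶ g_* g^* M`. -/
noncomputable def pullbackSections (g : Y ⟶ X) (φ : R →+* S)
    (h : g ≫ p = q ≫ Spec.map (CommRingCat.ofHom φ)) :
    GlobalSections p M →ₛₗ[φ] GlobalSections q ((Scheme.Modules.pullback g).obj M) where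
  toFun s := (((Scheme.Modules.pullbackPushforwardAdjunction g).unit.app M).app ⊤).hom s
  map_add' s t := map_add _ s t
  map_smul' a s := by
    have key : ((Scheme.ΓSpecIso (.of R)).inv ≫ p.appTop) ≫ g.appTop =
        CommRingCat.ofHom φ ≫ (Scheme.ΓSpecIso (.of S)).inv ≫ q.appTop := by
      rw [Category.assoc, ← Scheme.Hom.comp_appTop, h, Scheme.Hom.comp_appTop,
        Scheme.ΓSpecIso_inv_naturality_assoc]
    have e : g.appTop.hom (baseToSections p a) = baseToSections q (φ a) :=
      congrArg (fun ψ : CommRingCat.of R ⟶ Γ(Y, ⊤) => ψ.hom a) key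
    have h1 := Scheme.Modules.Hom.app_smul
      ((Scheme.Modules.pullbackPushforwardAdjunction g).unit.app M) (baseToSections p a)
      (U := ⊤) s
    let t : GlobalSections q ((Scheme.Modules.pullback g).obj M) :=
      (((Scheme.Modules.pullbackPushforwardAdjunction g).unit.app M).app ⊤).hom s
    exact Eq.trans h1 (congrArg (fun b : Γ(Y, ⊤) => b • t) e)

end GlobalSections

/-! ### The generic set of `r` points of `C` -/

section Generic

variable {k : Type u} [Field k] {C : Scheme.{u}} (f : C ⟶ Spec (.of k))

/-- The `r`-fold product `C × ⋯ × C` over `k`. -/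
noncomputable def power : ℕ → Over (Spec (CommRingCat.of k))
  | 0 => Over.mk (𝟙 _)
  | r + 1 => Over.mk (pullback.fst f (power r).hom ≫ f)

/-- The `r` projections `C × ⋯ × C ⟶ C`. -/
noncomputable def powerProj : (r : ℕ) → Fin r → ((power f r).left ⟶ C)
  | 0 => fun i => i.elim0
  | r + 1 => Fin.cases (pullback.fst f (power f r).hom)
      (fun i => pullback.snd f (power f r).hom ≫ powerProj r i)

theorem powerProj_comp (r : ℕ) (i : Fin r) : powerProj f r i ≫ f = (power f r).hom := by
  induction r with
  | zero => exact i.elim0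
  | succ r ih =>
    refine Fin.cases ?_ (fun i => ?_) i
    · rfl
    · change (pullback.snd f (power f r).hom ≫ powerProj f r i) ≫ f =
        pullback.fst f (power f r).hom ≫ f
      rw [Category.assoc, ih, pullback.condition]

variable [GeometricallyIrreducible f]

instance irreducibleSpace_power (r : ℕ) : IrreducibleSpace (power f r).left := by
  induction r with
  | zero => exact inferInstanceAs (IrreducibleSpace (Spec (CommRingCat.of k)))
  | succ r ih =>
    exact inferInstanceAs (IrreducibleSpace ↥(pullback f (power f r).hom))

/-- The function field `K` of `C × ⋯ × C` (`r` factors). -/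
noncomputable abbrev genericField (r : ℕ) : Type u :=
  (power f r).left.functionField

/-- The generic point of `C × ⋯ × C`, as a morphism `Spec K ⟶ C × ⋯ × C`. -/
noncomputable def genericPt (r : ℕ) : Spec (.of (genericField f r)) ⟶ (power f r).left :=
  (power f r).left.fromSpecStalk (genericPoint (power f r).left)

/-- The inclusion `k → K`. -/
noncomputable def toGenericField (r : ℕ) : k →+* genericField f r :=
  (Spec.preimage (genericPt f r ≫ (power f r).hom)).hom

noncomputable instance (r : ℕ) : Algebra k (genericField f r) :=
  (toGenericField f r).toAlgebra

/-- `C_K = C ×_k K`. -/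
noncomputable abbrev baseChange (r : ℕ) : Scheme.{u} :=
  pullback f (Spec.map (CommRingCat.ofHom (toGenericField f r)))

/-- The generic set of points: `x_i` is the `K`-rational point of `C_K` whose projection to `C`
is the `i`-th projection `C × ⋯ × C ⟶ C` at the generic point of `C × ⋯ × C`. -/
noncomputable def genericX (r : ℕ) (i : Fin r) : Spec (.of (genericField f r)) ⟶ baseChange f r :=
  pullback.lift (genericPt f r ≫ powerProj f r i) (𝟙 _) (by
    rw [Category.assoc, powerProj_comp, Category.id_comp, toGenericField,
      CommRingCat.ofHom_hom, Spec.map_preimage])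

/-- The ideal sheaf `∏ I_{x_i}^{m_i}` of `D = ∑ m_i x_i` on `C_K`. -/
noncomputable def idealD (r : ℕ) (m : Fin r → ℕ) : (baseChange f r).IdealSheafData :=
  ∏ i, (genericX f r i).ker ^ m i

/-- The divisor `D = ∑ m_i x_i`, as a closed subscheme of `C_K`. -/
noncomputable abbrev schemeD (r : ℕ) (m : Fin r → ℕ) : Scheme.{u} :=
  (idealD f r m).subscheme

/-- The morphism `D ⟶ C_K ⟶ C`. -/
noncomputable def toC (r : ℕ) (m : Fin r → ℕ) : schemeD f r m ⟶ C :=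
  (idealD f r m).subschemeι ≫ pullback.fst f (Spec.map (CommRingCat.ofHom (toGenericField f r)))

/-- The structure morphism `D ⟶ C_K ⟶ Spec K`. -/
noncomputable def toSpecK (r : ℕ) (m : Fin r → ℕ) : schemeD f r m ⟶ Spec (.of (genericField f r)) :=
  (idealD f r m).subschemeι ≫ pullback.snd f (Spec.map (CommRingCat.ofHom (toGenericField f r)))

theorem toC_comp (r : ℕ) (m : Fin r → ℕ) :
    toC f r m ≫ f = toSpecK f r m ≫ Spec.map (CommRingCat.ofHom (toGenericField f r)) := by
  simp only [toC, toSpecK, Category.assoc, pullback.condition]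

/-- The `K`-vector space `H⁰(C_K, 𝒪_D ⊗ L) = H⁰(D, L|_D)`, where `L|_D` is the pullback of `L`
along `D ⟶ C_K ⟶ C`. -/
abbrev H0D (L : C.Modules) (r : ℕ) (m : Fin r → ℕ) : Type u :=
  GlobalSections (toSpecK f r m) ((Scheme.Modules.pullback (toC f r m)).obj L)

noncomputable instance (L : C.Modules) (r : ℕ) (m : Fin r → ℕ) : Module k (H0D f L r m) :=
  Module.compHom _ (algebraMap k (genericField f r))

instance (L : C.Modules) (r : ℕ) (m : Fin r → ℕ) :
    IsScalarTower k (genericField f r) (H0D f L r m) :=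
  IsScalarTower.of_algebraMap_smul fun _ _ => rfl

/-- Evaluation of global sections of `L` along `D`: restriction
`H⁰(C, L) → H⁰(C_K, 𝒪_D ⊗ L)`. -/
noncomputable def evalD (L : C.Modules) (r : ℕ) (m : Fin r → ℕ) :
    GlobalSections f L →ₗ[k] H0D f L r m where
  toFun := pullbackSections f L (toSpecK f r m) (toC f r m) (toGenericField f r) (toC_comp f r m)
  map_add' := map_add _
  map_smul' := fun a s => (pullbackSections f L (toSpecK f r m) (toC f r m) (toGenericField f r)
    (toC_comp f r m)).map_smulₛₗ a s

/-- The canonical `K`-linear map `K ⊗_k V → H⁰(C_K, 𝒪_D ⊗ L)` for a subspace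
`V ⊆ H⁰(C, L)`. -/
noncomputable def canonicalMap (L : C.Modules) (V : Submodule k (GlobalSections f L)) (r : ℕ)
    (m : Fin r → ℕ) : genericField f r ⊗[k] V →ₗ[genericField f r] H0D f L r m :=
  LinearMap.liftBaseChange (genericField f r) ((evalD f L r m).comp V.subtype)

end Generic

end GenericDivisor

namespace GenericDivisor

/-! ### Derivations of fields of characteristic zero -/

section Derivations

/-- In characteristic zero, an element of a field which is killed by every `R`-derivation is
algebraic over `R`. -/
theorem isAlgebraic_of_forall_derivation_eq_zero {R K : Type*} [CommRing R] [IsDomain R] [Field K]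
    [CharZero K] [Algebra R K] [FaithfulSMul R K] (c : K)
    (h : ∀ D : Derivation R K K, D c = 0) : IsAlgebraic R c := by
  by_contra hc
  have hind : AlgebraicIndepOn R id ({c} : Set K) :=
    (algebraicIndependent_unique_type_iff (R := R) (ι := ({c} : Set K))
      (x := fun i => (i : K))).2 hc
  obtain ⟨s, hs, hb⟩ := exists_isTranscendenceBasis_superset hind
  have hcs : c ∈ s := hs rfl
  let v : s → K := Subtype.val
  let S := MvPolynomial s R
  let : Algebra S K := (MvPolynomial.aeval v).toRingHom.toAlgebra
  have hSK : ∀ p : S, algebraMap S K p = MvPolynomial.aeval v p := fun _ => rfl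
  have : IsScalarTower R S K := IsScalarTower.of_algebraMap_eq fun r => by
    rw [hSK, MvPolynomial.algebraMap_eq, MvPolynomial.aeval_C]
  have hinj : Function.Injective (algebraMap S K) := hb.1
  have : FaithfulSMul S K := (faithfulSMul_iff_algebraMap_injective S K).2 hinj
  let Q := FractionRing S
  let : Algebra Q K := FractionRing.liftAlgebra S K
  have : IsScalarTower S Q K := FractionRing.isScalarTower_liftAlgebra S K
  have halgS : Algebra.IsAlgebraic S K := by
    have h1 := hb.isAlgebraic
    constructor
    intro x
    obtain ⟨p, hp0, hp⟩ := h1.isAlgebraic x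
    let e : S ≃ₐ[R] Algebra.adjoin R (Set.range v) := hb.1.aevalEquiv
    refine ⟨p.map (e.symm : Algebra.adjoin R (Set.range v) →+* S), ?_, ?_⟩
    · exact (Polynomial.map_ne_zero_iff e.symm.injective).2 hp0
    · have hcomp : (algebraMap S K).comp (e.symm : Algebra.adjoin R (Set.range v) →+* S) =
          algebraMap (Algebra.adjoin R (Set.range v)) K := by
        refine RingHom.ext fun y => ?_
        obtain ⟨q, rfl⟩ := e.surjective y
        change algebraMap S K (e.symm (e q)) = _
        rw [e.symm_apply_apply]
        exact (hb.1.algebraMap_aevalEquiv q).symm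
      rw [Polynomial.aeval_def, Polynomial.eval₂_map, hcomp]
      exact hp
  have : Algebra.IsAlgebraic Q K := Algebra.IsAlgebraic.extendScalars (R := S)
    (IsFractionRing.injective S Q)
  have : CharZero Q := ((algebraMap Q K).charZero_iff (algebraMap Q K).injective).2 inferInstance
  have : Algebra.FormallyEtale Q K := Algebra.FormallyEtale.of_isSeparable Q K
  have : Algebra.FormallyEtale S Q :=
    Algebra.FormallyEtale.of_isLocalization (Rₘ := Q) (nonZeroDivisors S)
  have : Algebra.FormallyEtale S K := Algebra.FormallyEtale.comp S Q K
  have hne : KaehlerDifferential.D R K c ≠ 0 := by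
    intro h0
    have h1 := KaehlerDifferential.tensorKaehlerEquivOfFormallyEtale_symm_D_algebraMap R S K
      (MvPolynomial.X ⟨c, hcs⟩ : S)
    rw [hSK, MvPolynomial.aeval_X] at h1
    change (KaehlerDifferential.tensorKaehlerEquivOfFormallyEtale R S K).symm
      (KaehlerDifferential.D R K c) = _ at h1
    rw [h0, map_zero] at h1
    let b := (KaehlerDifferential.mvPolynomialBasis R s).baseChange K
    have h2 : b ⟨c, hcs⟩ = 0 := by
      rw [Module.Basis.baseChange_apply, KaehlerDifferential.mvPolynomialBasis_apply]
      exact h1.symm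
    exact b.ne_zero _ h2
  obtain ⟨l, hl⟩ := Module.Projective.exists_dual_ne_zero K hne
  exact hl (h (l.compDer (KaehlerDifferential.D R K)))

/-- A nonzero subspace of `ι → K` which is stable under a family of derivations acting
coordinatewise contains a nonzero vector whose coordinates are killed by the whole family. -/
theorem exists_ne_zero_forall_derivation_eq_zero {k K ι : Type*} [CommRing k] [Field K]
    [Algebra k K] [Fintype ι] (𝒟 : Set (Derivation k K K)) (N : Submodule K (ι → K))
    (hN : N ≠ ⊥) (hst : ∀ D ∈ 𝒟, ∀ x ∈ N, (fun i => D (x i)) ∈ N) :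
    ∃ x ∈ N, x ≠ 0 ∧ ∀ D ∈ 𝒟, ∀ i, D (x i) = 0 := by
  classical
  let P : ℕ → Prop := fun n => ∃ x ∈ N, x ≠ 0 ∧ (Finset.univ.filter fun i => x i ≠ 0).card = n
  have hP : ∃ n, P n := by
    obtain ⟨x, hx, hx0⟩ := N.ne_bot_iff.1 hN
    exact ⟨_, x, hx, hx0, rfl⟩
  obtain ⟨x, hx, hx0, hcard⟩ := Nat.find_spec hP
  obtain ⟨j, hj⟩ := Function.ne_iff.1 hx0
  have hj : x j ≠ 0 := hj
  refine ⟨(x j)⁻¹ • x, N.smul_mem _ hx, smul_ne_zero (inv_ne_zero hj) hx0, fun D hD => ?_⟩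
  by_contra! hne
  obtain ⟨i, hi⟩ := hne
  refine Nat.find_min hP (m := (Finset.univ.filter fun i => D (((x j)⁻¹ • x) i) ≠ 0).card) ?_
    ⟨_, hst D hD _ (N.smul_mem _ hx), Function.ne_iff.2 ⟨i, hi⟩, rfl⟩
  rw [← hcard]
  refine Finset.card_lt_card ⟨fun l hl => ?_, fun hsub => ?_⟩
  · simp only [Finset.mem_filter, Finset.mem_univ, true_and] at hl ⊢
    intro h0
    simp [h0] at hl
  · have := hsub (show j ∈ _ by simpa using hj)
    rw [Finset.mem_filter, Pi.smul_apply, smul_eq_mul, inv_mul_cancel₀ hj] at this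
    exact this.2 D.map_one_eq_zero

end Derivations

/-! ### Extension of derivations to `K ⊗ A` -/

section TensorDerivation

variable {k A K : Type*} [CommRing k] [CommRing A] [Algebra k A] [CommRing K] [Algebra k K]

/-- The `A`-linear derivation `D ⊗ 1` of `K ⊗ A`, for a derivation `D` of `K`. -/
noncomputable def tensorDer (D : Derivation k K K) : Derivation k (K ⊗[k] A) (K ⊗[k] A) :=
  Derivation.mk' (LinearMap.rTensor A (D : K →ₗ[k] K)) (by
    intro x y
    induction x with
    | zero => simp
    | add x₁ x₂ h₁ h₂ => simp only [add_mul, map_add, h₁, h₂, add_smul, smul_add]; abel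
    | tmul c a =>
      induction y with
      | zero => simp
      | add y₁ y₂ h₁ h₂ => simp only [mul_add, map_add, h₁, h₂, add_smul, smul_add]; abel
      | tmul d b =>
        simp only [Algebra.TensorProduct.tmul_mul_tmul, LinearMap.rTensor_tmul, smul_eq_mul,
          Derivation.coeFn_coe, Derivation.leibniz, TensorProduct.add_tmul, mul_comm b a])

@[simp]
theorem tensorDer_tmul (D : Derivation k K K) (c : K) (a : A) :
    tensorDer D (c ⊗ₜ[k] a) = D c ⊗ₜ a := rfl

end TensorDerivation

/-- Derivations of `ℚ`-algebras preserve nilpotent elements. -/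
theorem isNilpotent_derivation {k R : Type*} [CommRing k] [CommRing R] [Algebra k R] [Algebra ℚ R]
    (D : Derivation k R R) {x : R} (hx : IsNilpotent x) : IsNilpotent (D x) := by
  obtain ⟨n, hn⟩ := hx
  have key : ∀ j ≤ n, x ^ (n - j) * D x ^ (2 * j) = 0 := by
    intro j
    induction j with
    | zero => intro _; simpa using hn
    | succ j ih =>
      intro hj
      have h0 := ih (by omega)
      obtain ⟨l, hl⟩ : ∃ l, n - j = l + 1 := ⟨n - j - 1, by omega⟩
      have hl' : n - (j + 1) = l := by omega
      rw [hl] at h0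
      rw [hl']
      have h1 : D (x ^ (l + 1) * D x ^ (2 * j)) * D x = 0 := by rw [h0, map_zero, zero_mul]
      rw [Derivation.leibniz, Derivation.leibniz_pow, Derivation.leibniz_pow] at h1
      simp only [smul_eq_mul, nsmul_eq_mul, Nat.add_sub_cancel] at h1
      have h2 : (((l + 1 : ℕ) : R)) * (x ^ l * D x ^ (2 * (j + 1))) = 0 := by
        rcases Nat.eq_zero_or_pos j with rfl | hjp
        · simp only [mul_zero, pow_zero, Nat.cast_zero, zero_mul, mul_one, one_mul, zero_add] at h1 ⊢
          linear_combination h1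
        · obtain ⟨q, hq⟩ : ∃ q, 2 * j = q + 1 := ⟨2 * j - 1, by omega⟩
          rw [show 2 * (j + 1) = q + 1 + 2 by omega]
          rw [hq] at h1 h0
          simp only [Nat.add_sub_cancel] at h1
          linear_combination h1 - ((q + 1 : ℕ) : R) * D (D x) * h0
      have h3 : IsUnit (((l + 1 : ℕ) : R)) := by
        have : IsUnit ((l + 1 : ℕ) : ℚ) := IsUnit.mk0 _ (by positivity)
        simpa using this.map (algebraMap ℚ R)
      exact (h3.mul_right_eq_zero).1 h2
  refine ⟨2 * n, ?_⟩
  simpa using key n le_rfl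

section Stable

variable {k A K ι : Type*} [Field k] [CommRing A] [Algebra k A] [Field K] [Algebra k K]
  [Fintype ι]

theorem tensorDer_sum (D : Derivation k K K) (a : ι → A) (y : ι → K) :
    tensorDer D (∑ i, y i ⊗ₜ[k] a i) = ∑ i, D (y i) ⊗ₜ[k] a i := by
  simp

theorem sum_tmul_ne_zero {a : ι → A} (ha : LinearIndependent k a) {y : ι → K} (hy : y ≠ 0) :
    ∑ i, y i ⊗ₜ[k] a i ≠ 0 := by
  intro h
  have h1 : LinearIndependent K (fun i => (1 : K) ⊗ₜ[k] a i) :=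
    Module.Flat.linearIndependent_one_tmul ha
  refine hy (funext fun i => Fintype.linearIndependent_iff.1 h1 y ?_ i)
  simpa [TensorProduct.smul_tmul'] using h

/-- A `K`-subspace of `K ⊗ A` meeting the span of `1 ⊗ a i` and stable under derivations of `K`
contains a nonzero combination of the `1 ⊗ a i` with constant coefficients. -/
theorem exists_sum_tmul_mem_of_stable (a : ι → A)
    (𝒟 : Set (Derivation k K K)) (N : Submodule K (K ⊗[k] A))
    (hst : ∀ D ∈ 𝒟, ∀ y : ι → K, ∑ i, y i ⊗ₜ[k] a i ∈ N → ∑ i, D (y i) ⊗ₜ[k] a i ∈ N)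
    {y₀ : ι → K} (hy₀ : y₀ ≠ 0) (hmem : ∑ i, y₀ i ⊗ₜ[k] a i ∈ N) :
    ∃ y : ι → K, y ≠ 0 ∧ ∑ i, y i ⊗ₜ[k] a i ∈ N ∧ ∀ D ∈ 𝒟, ∀ i, D (y i) = 0 := by
  let φ : (ι → K) →ₗ[K] K ⊗[k] A := Fintype.linearCombination K (fun i => (1 : K) ⊗ₜ[k] a i)
  have hφ : ∀ y, φ y = ∑ i, y i ⊗ₜ[k] a i := fun y => by
    simp [φ, Fintype.linearCombination_apply, TensorProduct.smul_tmul']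
  obtain ⟨y, hy, hy0, hD⟩ := exists_ne_zero_forall_derivation_eq_zero 𝒟 (N.comap φ)
    ((Submodule.ne_bot_iff _).2 ⟨y₀, by simpa [hφ] using hmem, hy₀⟩)
    (fun D hD x hx => by
      rw [Submodule.mem_comap, hφ] at hx ⊢
      exact hst D hD x hx)
  exact ⟨y, hy0, by simpa [hφ] using hy, hD⟩

/-- Every element of `K ⊗ A` is a combination of finitely many elements of a basis of `A`. -/
theorem exists_eq_sum_tmul (x : K ⊗[k] A) :
    ∃ (s : Finset (Module.Basis.ofVectorSpaceIndex k A)) (y : s → K),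
      x = ∑ i, y i ⊗ₜ[k] (i.1 : A) := by
  let b := Module.Basis.ofVectorSpace k A
  let c := (b.baseChange K).repr x
  refine ⟨c.support, fun i => c i, ?_⟩
  rw [Finset.sum_coe_sort c.support (fun i => c i ⊗ₜ[k] (i : A))]
  conv_lhs => rw [← (b.baseChange K).linearCombination_repr x]
  rw [Finsupp.linearCombination_apply, Finsupp.sum]
  refine Finset.sum_congr rfl fun i _ => ?_
  rw [Module.Basis.baseChange_apply, Module.Basis.ofVectorSpace_apply_self,
    TensorProduct.smul_tmul', smul_eq_mul, mul_one]

theorem linearIndependent_ofVectorSpaceIndex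
    (s : Finset (Module.Basis.ofVectorSpaceIndex k A)) :
    LinearIndependent k (fun i : s => (i.1 : A)) :=
  (Module.Basis.ofVectorSpaceIndex.linearIndependent k A).comp (fun i : s => i.1)
    Subtype.val_injective

end Stable

/-- Over a field of characteristic zero every domain is geometrically reduced. -/
theorem isReduced_tensorProduct {k A K : Type*} [Field k] [CharZero k] [CommRing A] [IsDomain A]
    [Algebra k A] [Field K] [Algebra k K] : IsReduced (K ⊗[k] A) := by
  let F := FractionRing A
  have hinj : Function.Injective
      (Algebra.TensorProduct.map (AlgHom.id k K) (IsScalarTower.toAlgHom k A F)) :=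
    Module.Flat.lTensor_preserves_injective_linearMap (M := K)
      (IsScalarTower.toAlgHom k A F).toLinearMap (IsFractionRing.injective A F)
  suffices IsReduced (K ⊗[k] F) from isReduced_of_injective _ hinj
  constructor
  intro x hx
  by_contra hx0
  have : CharZero K := charZero_of_injective_algebraMap (algebraMap k K).injective
  let : Algebra ℚ k := DivisionRing.toRatAlgebra
  let : Algebra ℚ (K ⊗[k] F) := ((algebraMap k (K ⊗[k] F)).comp (algebraMap ℚ k)).toAlgebra
  obtain ⟨s, y₀, rfl⟩ := exists_eq_sum_tmul x
  have hs := linearIndependent_ofVectorSpaceIndex (k := k) s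
  have hy₀ : y₀ ≠ 0 := by
    rintro rfl
    simp at hx0
  obtain ⟨y, hy, hyN, hyD⟩ := exists_sum_tmul_mem_of_stable (fun i : s => (i.1 : F)) Set.univ
    ((nilradical (K ⊗[k] F)).restrictScalars K)
    (fun D _ y hy => by
      rw [← tensorDer_sum]
      exact isNilpotent_derivation _ hy) hy₀ hx
  have halg : ∀ i, IsAlgebraic k (y i) := fun i =>
    isAlgebraic_of_forall_derivation_eq_zero _ fun D => hyD D trivial i
  let L := IntermediateField.adjoin k (Set.range y)
  have : FiniteDimensional k L := IntermediateField.finiteDimensional_adjoin (S := Set.range y) (by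
    rintro _ ⟨i, rfl⟩
    exact (halg i).isIntegral)
  have hyL : ∀ i, y i ∈ L := fun i => IntermediateField.subset_adjoin k _ ⟨i, rfl⟩
  let z : L ⊗[k] F := ∑ i, (⟨y i, hyL i⟩ : L) ⊗ₜ[k] (i.1 : F)
  have hz0 : z ≠ 0 := sum_tmul_ne_zero hs fun h => hy (funext fun i => by
    simpa using congrArg (fun c => ((c i : L) : K)) h)
  have hLinj : Function.Injective (Algebra.TensorProduct.map L.val (AlgHom.id k F)) :=
    Module.Flat.rTensor_preserves_injective_linearMap (M := F)
      L.val.toLinearMap Subtype.val_injective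
  have hznil : IsNilpotent z := by
    refine (IsNilpotent.map_iff hLinj).1 ?_
    have : Algebra.TensorProduct.map L.val (AlgHom.id k F) z = ∑ i, y i ⊗ₜ[k] (i.1 : F) := by
      simp [z]
    rw [this]
    exact hyN
  have : Algebra.FormallyUnramified k L := Algebra.FormallyUnramified.of_isSeparable k L
  have : IsReduced (F ⊗[k] L) := Algebra.FormallyUnramified.isReduced_of_field F (F ⊗[k] L)
  have hz' := hznil.map (Algebra.TensorProduct.comm k L F)
  exact hz0 ((Algebra.TensorProduct.comm k L F).injective (by rw [hz'.eq_zero, map_zero]))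

/-! ### Stability of ideals under derivations -/

section IdealStable

variable {k B : Type*} [CommRing k] [CommRing B] [Algebra k B] (d : Derivation k B B)

theorem derivation_mem_mul {I J : Ideal B} (hI : ∀ x ∈ I, d x ∈ I) (hJ : ∀ x ∈ J, d x ∈ J) :
    ∀ x ∈ I * J, d x ∈ I * J := by
  intro x hx
  induction hx using Submodule.mul_induction_on' with
  | mem_mul_mem a ha b hb =>
    rw [d.leibniz, smul_eq_mul, smul_eq_mul, mul_comm b]
    exact add_mem (Ideal.mul_mem_mul ha (hJ b hb)) (Ideal.mul_mem_mul (hI a ha) hb)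
  | add a _ b _ ha hb => rw [map_add]; exact add_mem ha hb

theorem derivation_mem_pow {I : Ideal B} (hI : ∀ x ∈ I, d x ∈ I) (n : ℕ) :
    ∀ x ∈ I ^ n, d x ∈ I ^ n := by
  induction n with
  | zero => simp
  | succ n ih => rw [pow_succ]; exact derivation_mem_mul d ih hI

theorem derivation_mem_prod {ι : Type*} (s : Finset ι) {I : ι → Ideal B}
    (hI : ∀ i ∈ s, ∀ x ∈ I i, d x ∈ I i) : ∀ x ∈ ∏ i ∈ s, I i, d x ∈ ∏ i ∈ s, I i := by
  classical
  induction s using Finset.induction_on with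
  | empty => simp
  | insert i s hi ih =>
    rw [Finset.prod_insert hi]
    exact derivation_mem_mul d (hI i (by simp)) (ih fun j hj => hI j (by simp [hj]))

theorem derivation_mem_pow_of_mem_pow_succ (I : Ideal B) (n : ℕ) :
    ∀ x ∈ I ^ (n + 1), d x ∈ I ^ n := by
  induction n with
  | zero => simp
  | succ n ih =>
    intro x hx
    rw [pow_succ] at hx
    induction hx using Submodule.mul_induction_on' with
    | mem_mul_mem a ha b hb =>
      rw [d.leibniz, smul_eq_mul, smul_eq_mul, mul_comm b]
      refine add_mem (Ideal.mul_mem_right _ _ ha) ?_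
      rw [pow_succ]
      exact Ideal.mul_mem_mul (ih a ha) hb
    | add a _ b _ ha hb => rw [map_add]; exact add_mem ha hb

theorem derivation_mem_pow_mul {I Q : Ideal B} (hQ : ∀ x ∈ Q, d x ∈ Q) (n : ℕ) :
    ∀ x ∈ I ^ (n + 1) * Q, d x ∈ I ^ n * Q := by
  intro x hx
  induction hx using Submodule.mul_induction_on' with
  | mem_mul_mem a ha b hb =>
    rw [d.leibniz, smul_eq_mul, smul_eq_mul, mul_comm b]
    exact add_mem (Ideal.mul_mem_mul (Ideal.pow_le_pow_right n.le_succ ha) (hQ b hb))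
      (Ideal.mul_mem_mul (derivation_mem_pow_of_mem_pow_succ d I n a ha) hb)
  | add a _ b _ ha hb => rw [map_add]; exact add_mem ha hb

end IdealStable

/-! ### The ideal of a rational point -/

section PointIdeal

variable {k A K : Type*} [Field k] [CommRing A] [Algebra k A] [Field K] [Algebra k K]

/-- Evaluation `K ⊗ A → K` at the `K`-point given by `σ : A → K`. -/
noncomputable def evalAt (σ : A →ₐ[k] K) : K ⊗[k] A →ₐ[K] K :=
  Algebra.TensorProduct.lift (Algebra.ofId K K) σ fun _ _ => Commute.all _ _

@[simp]
theorem evalAt_tmul (σ : A →ₐ[k] K) (c : K) (a : A) : evalAt σ (c ⊗ₜ[k] a) = c * σ a := by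
  simp [evalAt]

/-- The ideal of the `K`-point given by `σ : A → K`. -/
noncomputable def pointIdeal (σ : A →ₐ[k] K) : Ideal (K ⊗[k] A) :=
  RingHom.ker (evalAt σ)

theorem mem_pointIdeal {σ : A →ₐ[k] K} {x : K ⊗[k] A} : x ∈ pointIdeal σ ↔ evalAt σ x = 0 :=
  Iff.rfl

/-- The element `a - σ a` of `K ⊗ A`. -/
noncomputable def delta (σ : A →ₐ[k] K) (a : A) : K ⊗[k] A :=
  (1 : K) ⊗ₜ[k] a - σ a ⊗ₜ[k] (1 : A)

theorem delta_mem (σ : A →ₐ[k] K) (a : A) : delta σ a ∈ pointIdeal σ := by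
  rw [mem_pointIdeal, delta, map_sub, evalAt_tmul, evalAt_tmul, map_one, one_mul, mul_one, sub_self]

theorem sub_evalAt_mem_pointIdeal (σ : A →ₐ[k] K) (x : K ⊗[k] A) :
    x - algebraMap K (K ⊗[k] A) (evalAt σ x) ∈ pointIdeal σ := by
  rw [mem_pointIdeal, map_sub, AlgHom.commutes, Algebra.algebraMap_self, RingHom.id_apply, sub_self]

theorem pointIdeal_eq_span (σ : A →ₐ[k] K) :
    pointIdeal σ = Ideal.span (Set.range (delta σ)) := by
  refine le_antisymm (fun x hx => ?_) (Ideal.span_le.2 ?_)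
  · have key : ∀ x : K ⊗[k] A, x - algebraMap K (K ⊗[k] A) (evalAt σ x) ∈
        Ideal.span (Set.range (delta σ)) := by
      intro x
      induction x with
      | zero => simp
      | add x y hx hy =>
        rw [map_add, map_add, add_sub_add_comm]
        exact add_mem hx hy
      | tmul c a =>
        have : c ⊗ₜ[k] a - algebraMap K (K ⊗[k] A) (evalAt σ (c ⊗ₜ[k] a)) =
            c ⊗ₜ[k] 1 * delta σ a := by
          rw [delta, mul_sub, Algebra.TensorProduct.tmul_mul_tmul,
            Algebra.TensorProduct.tmul_mul_tmul, evalAt_tmul,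
            Algebra.TensorProduct.algebraMap_apply]
          simp
        rw [this]
        exact Ideal.mul_mem_left _ _ (Ideal.subset_span ⟨a, rfl⟩)
    simpa [mem_pointIdeal.1 hx] using key x
  · rintro _ ⟨a, rfl⟩
    exact delta_mem σ a

theorem isCoprime_pointIdeal {σ τ : A →ₐ[k] K} (h : σ ≠ τ) :
    IsCoprime (pointIdeal σ) (pointIdeal τ) := by
  obtain ⟨a, ha⟩ := DFunLike.ne_iff.1 h
  rw [Ideal.isCoprime_iff_sup_eq, Ideal.eq_top_iff_one]
  have h1 : delta τ a - delta σ a = algebraMap K (K ⊗[k] A) (σ a - τ a) := by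
    rw [delta, delta, Algebra.TensorProduct.algebraMap_apply, Algebra.algebraMap_self,
      RingHom.id_apply, TensorProduct.sub_tmul]
    abel
  have h2 : algebraMap K (K ⊗[k] A) (σ a - τ a) ∈ pointIdeal σ ⊔ pointIdeal τ := by
    rw [← h1]
    exact sub_mem (Ideal.mem_sup_right (delta_mem τ a)) (Ideal.mem_sup_left (delta_mem σ a))
  have h3 := Ideal.mul_mem_left _ (algebraMap K (K ⊗[k] A) (σ a - τ a)⁻¹) h2
  rwa [← map_mul, inv_mul_cancel₀ (sub_ne_zero.2 ha), map_one] at h3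

/-- A derivation of `K` killing the image of `σ` preserves the ideal of the point `σ`. -/
theorem tensorDer_mem_pointIdeal {σ : A →ₐ[k] K} {D : Derivation k K K} (h : ∀ a, D (σ a) = 0) :
    ∀ x ∈ pointIdeal σ, tensorDer D x ∈ pointIdeal σ := by
  intro x hx
  rw [pointIdeal_eq_span] at hx
  induction hx using Submodule.span_induction with
  | zero => simp
  | add x y _ _ hx hy => rw [map_add]; exact add_mem hx hy
  | mem x hx =>
    obtain ⟨a, rfl⟩ := hx
    simp [delta, h]
  | smul b x hx h' =>
    rw [smul_eq_mul, Derivation.leibniz, smul_eq_mul, smul_eq_mul]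
    rw [← Ideal.span, ← pointIdeal_eq_span] at hx
    exact add_mem (Ideal.mul_mem_left _ _ h') (Ideal.mul_mem_right _ _ hx)

theorem delta_mul (σ : A →ₐ[k] K) (a b : A) :
    delta σ (a * b) = σ a ⊗ₜ[k] 1 * delta σ b + σ b ⊗ₜ[k] 1 * delta σ a + delta σ a * delta σ b := by
  have h1 : (1 : K) ⊗ₜ[k] (a * b) = ((1 : K) ⊗ₜ[k] a) * ((1 : K) ⊗ₜ[k] b) := by simp
  have h2 : σ (a * b) ⊗ₜ[k] (1 : A) = (σ a ⊗ₜ[k] (1 : A)) * (σ b ⊗ₜ[k] (1 : A)) := by simp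
  rw [delta, delta, delta, h1, h2]
  ring

theorem delta_add (σ : A →ₐ[k] K) (a b : A) : delta σ (a + b) = delta σ a + delta σ b := by
  rw [delta, delta, delta, TensorProduct.tmul_add, map_add, TensorProduct.add_tmul]
  abel

theorem delta_algebraMap (σ : A →ₐ[k] K) (c : k) : delta σ (algebraMap k A c) = 0 := by
  rw [delta, AlgHom.commutes, Algebra.algebraMap_eq_smul_one, Algebra.algebraMap_eq_smul_one,
    TensorProduct.smul_tmul, sub_self]

/-- A polynomial relation of an algebraic element which is separable at this element. -/
theorem exists_aeval_derivative_ne_zero {R S : Type*} [CommRing R] [IsDomain R] [CharZero R]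
    [CommRing S] [IsDomain S] [Algebra R S] [FaithfulSMul R S] {a : S} (ha : IsAlgebraic R a) :
    ∃ p : Polynomial R, Polynomial.aeval a p = 0 ∧ Polynomial.aeval a p.derivative ≠ 0 := by
  classical
  let P : ℕ → Prop := fun n => ∃ p : Polynomial R, p ≠ 0 ∧ Polynomial.aeval a p = 0 ∧
    p.natDegree = n
  have hP : ∃ n, P n := by
    obtain ⟨p, hp, hp0⟩ := ha
    exact ⟨_, p, hp, hp0, rfl⟩
  obtain ⟨p, hp, hp0, hdeg⟩ := Nat.find_spec hP
  refine ⟨p, hp0, fun h => ?_⟩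
  have hpos : p.natDegree ≠ 0 := by
    intro h0
    obtain ⟨c, rfl⟩ := Polynomial.natDegree_eq_zero.1 h0
    rw [Polynomial.aeval_C] at hp0
    refine hp ?_
    rw [(FaithfulSMul.algebraMap_injective R S) (hp0.trans (map_zero _).symm), Polynomial.C_0]
  refine Nat.find_min hP (m := p.derivative.natDegree) ?_ ⟨_, ?_, h, rfl⟩
  · rw [← hdeg]
    exact Polynomial.natDegree_derivative_lt hpos
  · intro h0
    exact hpos (Polynomial.derivative_eq_zero.1 h0)

/-- If `A` is algebraic over `k[t]`, the ideal of an injective point is generated by `t - σ t`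
modulo its square. -/
theorem pointIdeal_le_span_sup_sq [CharZero k] [IsDomain A] {σ : A →ₐ[k] K}
    (hσ : Function.Injective σ) {t : A} (ht : ∀ a : A, IsAlgebraic (Algebra.adjoin k {t}) a) :
    pointIdeal σ ≤ Ideal.span {delta σ t} ⊔ pointIdeal σ ^ 2 := by
  set Q := Ideal.span {delta σ t} ⊔ pointIdeal σ ^ 2 with hQ
  have hsq : ∀ a b, delta σ a * delta σ b ∈ Q := fun a b =>
    Ideal.mem_sup_right (by rw [pow_two]; exact Ideal.mul_mem_mul (delta_mem σ a) (delta_mem σ b))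
  let S : Subalgebra k A :=
    { carrier := {a | delta σ a ∈ Q}
      mul_mem' := fun {a b} ha hb => by
        rw [Set.mem_ofPred_eq, delta_mul]
        exact add_mem (add_mem (Ideal.mul_mem_left _ _ hb) (Ideal.mul_mem_left _ _ ha)) (hsq _ _)
      add_mem' := fun {a b} ha hb => by
        rw [Set.mem_ofPred_eq, delta_add]
        exact add_mem ha hb
      algebraMap_mem' := fun c => by
        rw [Set.mem_ofPred_eq, delta_algebraMap]
        exact zero_mem _ }
  have hS : Algebra.adjoin k {t} ≤ S := by
    rw [Algebra.adjoin_le_iff, Set.singleton_subset_iff]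
    exact Ideal.mem_sup_left (Ideal.mem_span_singleton_self _)
  rw [pointIdeal_eq_span σ, Ideal.span_le]
  rintro _ ⟨a, rfl⟩
  have : CharZero A := charZero_of_injective_algebraMap (algebraMap k A).injective
  obtain ⟨p, hp0, hp1⟩ := exists_aeval_derivative_ne_zero (ht a)
  have hpow : ∀ n : ℕ, delta σ (a ^ n) - σ (n * a ^ (n - 1)) ⊗ₜ[k] 1 * delta σ a ∈ Q := by
    intro n
    induction n with
    | zero =>
      have := delta_algebraMap σ (1 : k)
      rw [map_one] at this
      simp [this]
    | succ n ih =>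
      have h1 : σ ((n + 1 : ℕ) * a ^ (n + 1 - 1)) ⊗ₜ[k] (1 : A) =
          σ a ⊗ₜ[k] (1 : A) * (σ (n * a ^ (n - 1)) ⊗ₜ[k] (1 : A)) + σ (a ^ n) ⊗ₜ[k] (1 : A) := by
        rw [Algebra.TensorProduct.tmul_mul_tmul, ← map_mul, one_mul, ← TensorProduct.add_tmul,
          ← map_add]
        congr 2
        rcases n with _ | n
        · simp
        · simp only [Nat.add_sub_cancel]
          push_cast
          ring
      rw [h1, pow_succ', delta_mul]
      have h2 := add_mem (Ideal.mul_mem_left _ (σ a ⊗ₜ[k] (1 : A)) ih) (hsq a (a ^ n))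
      convert h2 using 1
      ring
  have hpoly : ∀ p : Polynomial (Algebra.adjoin k {t}),
      delta σ (Polynomial.aeval a p) -
        σ (Polynomial.aeval a p.derivative) ⊗ₜ[k] 1 * delta σ a ∈ Q := by
    intro p
    induction p using Polynomial.induction_on' with
    | add p q hp hq =>
      have := add_mem hp hq
      convert this using 1
      rw [map_add, map_add, map_add, map_add, delta_add, TensorProduct.add_tmul]
      ring
    | monomial n c =>
      rw [Polynomial.derivative_monomial, Polynomial.aeval_monomial, Polynomial.aeval_monomial,
        delta_mul]
      have h3 : σ (algebraMap (Algebra.adjoin k {t}) A (c * n) * a ^ (n - 1)) ⊗ₜ[k] (1 : A) =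
          σ (c : A) ⊗ₜ[k] (1 : A) * (σ (n * a ^ (n - 1)) ⊗ₜ[k] (1 : A)) := by
        rw [Algebra.TensorProduct.tmul_mul_tmul, ← map_mul, one_mul,
          map_mul (algebraMap (Algebra.adjoin k {t}) A), map_natCast, mul_assoc]
        rfl
      rw [h3]
      have h4 := add_mem (add_mem (Ideal.mul_mem_left _ (σ (c : A) ⊗ₜ[k] (1 : A)) (hpow n))
        (hsq c (a ^ n))) (Ideal.mul_mem_left _ (σ (a ^ n) ⊗ₜ[k] (1 : A)) (hS c.2))
      convert h4 using 1
      change σ (c : A) ⊗ₜ[k] (1 : A) * _ + _ * delta σ (c : A) + delta σ (c : A) * _ - _ = _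
      ring
  have h5 := hpoly p
  have h6 : delta σ (0 : A) = 0 := by simpa using delta_algebraMap σ (0 : k)
  rw [hp0, h6, zero_sub, neg_mem_iff] at h5
  have h7 := Ideal.mul_mem_left _ ((σ (Polynomial.aeval a p.derivative))⁻¹ ⊗ₜ[k] (1 : A)) h5
  rwa [← mul_assoc, Algebra.TensorProduct.tmul_mul_tmul, inv_mul_cancel₀, one_mul,
    ← Algebra.TensorProduct.one_def, one_mul] at h7
  exact (map_ne_zero_iff σ hσ).2 hp1

end PointIdeal

/-! ### Maximal rank at generic points, affine version -/

section Generic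

variable {k A K ι : Type*} [Field k] [CommRing A] [Algebra k A] [Field K] [Algebra k K]

/-- A family of `K`-points of `A` is generic if every member is generic over a subalgebra of `K`
over which all the others are defined. -/
def IsGenericFamily (σ : ι → A →ₐ[k] K) : Prop :=
  ∀ i, ∃ R : Subalgebra k K, (∀ j ≠ i, ∀ a, σ j a ∈ R) ∧
    Function.Injective (Algebra.TensorProduct.productMap R.val (σ i))

variable {σ : ι → A →ₐ[k] K}

theorem IsGenericFamily.injective (h : IsGenericFamily σ) (i : ι) : Function.Injective (σ i) := by
  obtain ⟨R, -, hR⟩ := h i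
  intro a b hab
  have h1 : (1 : R) ⊗ₜ[k] a = (1 : R) ⊗ₜ[k] b := hR (by simpa using hab)
  exact Algebra.TensorProduct.includeRight_injective (algebraMap k R).injective h1

theorem IsGenericFamily.ne (h : IsGenericFamily σ) {a : A} (ha : a ∉ Set.range (algebraMap k A))
    {i j : ι} (hij : i ≠ j) : σ i ≠ σ j := by
  obtain ⟨R, hR, hinj⟩ := h i
  intro he
  have h1 : (1 : R) ⊗ₜ[k] a = (⟨σ j a, hR j hij.symm a⟩ : R) ⊗ₜ[k] (1 : A) :=
    hinj (by simp [he])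
  obtain ⟨l, hl0, hl1⟩ := Submodule.exists_dual_map_eq_bot_of_notMem
    (p := Submodule.span k {(1 : A)}) (x := a) (fun hm => ha (by
      obtain ⟨c, rfl⟩ := Submodule.mem_span_singleton.1 hm
      exact ⟨c, Algebra.algebraMap_eq_smul_one c⟩)) inferInstance
  have hl1' : l 1 = 0 := by
    have : l 1 ∈ (Submodule.span k {(1 : A)}).map l :=
      Submodule.mem_map_of_mem (Submodule.mem_span_singleton_self _)
    rwa [hl1, Submodule.mem_bot] at this
  have h2 := congrArg (fun x => (TensorProduct.rid k R) (LinearMap.lTensor R l x)) h1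
  simp only [LinearMap.lTensor_tmul, TensorProduct.rid_tmul, hl1', zero_smul] at h2
  exact (smul_ne_zero hl0 one_ne_zero) h2

/-- A nonzero element of `K ⊗ A` with coefficients algebraic over `R` does not vanish at a point
which is generic over `R`. -/
theorem evalAt_ne_zero_of_isAlgebraic [IsDomain (K ⊗[k] A)] {κ : Type*} [Fintype κ]
    {τ : A →ₐ[k] K} {R : Subalgebra k K}
    (hinj : Function.Injective (Algebra.TensorProduct.productMap R.val τ))
    {a : κ → A} {y : κ → K} (hy : ∀ i, IsAlgebraic R (y i)) (h0 : ∑ i, y i ⊗ₜ[k] a i ≠ 0) :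
    evalAt τ (∑ i, y i ⊗ₜ[k] a i) ≠ 0 := by
  intro hx
  let φ : R ⊗[k] A →ₐ[k] K ⊗[k] A := Algebra.TensorProduct.map R.val (AlgHom.id k A)
  have hφ : Function.Injective φ :=
    Module.Flat.rTensor_preserves_injective_linearMap (M := A)
      R.val.toLinearMap Subtype.val_injective
  let : Algebra (R ⊗[k] A) (K ⊗[k] A) := φ.toRingHom.toAlgebra
  have : FaithfulSMul (R ⊗[k] A) (K ⊗[k] A) := (faithfulSMul_iff_algebraMap_injective _ _).2 hφ
  have hdom : IsDomain (R ⊗[k] A) := hφ.isDomain φ.toRingHom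
  have : Nontrivial (R ⊗[k] A) := hdom.toNontrivial
  have halg : IsAlgebraic (R ⊗[k] A) (∑ i, y i ⊗ₜ[k] a i) := by
    refine Finset.sum_induction _ (IsAlgebraic (R ⊗[k] A)) (fun _ _ h₁ h₂ => h₁.add h₂)
      isAlgebraic_zero fun i _ => ?_
    have h1 : y i ⊗ₜ[k] a i = (y i ⊗ₜ[k] (1 : A)) * algebraMap (R ⊗[k] A) (K ⊗[k] A)
        ((1 : R) ⊗ₜ[k] a i) := by
      change _ = _ * φ _
      simp [φ]
    rw [h1]
    refine IsAlgebraic.mul ?_ (isAlgebraic_algebraMap _)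
    have : Nontrivial A := by
      by_contra hA
      rw [not_nontrivial_iff_subsingleton] at hA
      exact not_subsingleton (K ⊗[k] A) inferInstance
    refine IsAlgebraic.ringHom_of_comp_eq
      (f := (Algebra.TensorProduct.includeLeft : R →ₐ[k] R ⊗[k] A))
      (g := (Algebra.TensorProduct.includeLeft : K →ₐ[k] K ⊗[k] A)) (hy i) ?_ ?_
    · exact Algebra.TensorProduct.includeLeft_injective (algebraMap k A).injective
    · refine RingHom.ext fun r => ?_
      change φ (r ⊗ₜ[k] 1) = (r : K) ⊗ₜ[k] 1
      simp [φ]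
  have hprime : (pointIdeal τ).comap (algebraMap (R ⊗[k] A) (K ⊗[k] A)) ≠ ⊥ :=
    Ideal.comap_ne_bot_of_algebraic_mem h0 hx halg
  refine hprime (eq_bot_iff.2 fun z hz => ?_)
  have h2 : evalAt τ (φ z) = Algebra.TensorProduct.productMap R.val τ z := by
    clear hz
    induction z with
    | zero => simp
    | add x y hx hy => rw [map_add, map_add, map_add, hx, hy]
    | tmul r a => simp [φ]
  exact hinj ((h2.symm.trans hz).trans (map_zero _).symm)

/-- An ideal `I ^ n * Q` with `I` principal modulo its square and `Q` coprime to `I` is principal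
modulo `I ^ (n + 1) * Q`. -/
theorem exists_pow_mul_le_span_sup {B : Type*} [CommRing B] {I Q : Ideal B} {τ : B} (hτI : τ ∈ I)
    (hτ : I ≤ Ideal.span {τ} ⊔ I ^ 2) (hQ : IsCoprime I Q) (n : ℕ) :
    ∃ q ∈ I ^ n * Q, I ^ n * Q ≤ Ideal.span {q} ⊔ I ^ (n + 1) * Q := by
  obtain ⟨i, hi, s, hs, his⟩ := Ideal.isCoprime_iff_exists.1 hQ
  have hτn : ∀ n, Ideal.span {τ ^ n} ≤ I ^ n := fun n => by
    rw [Ideal.span_singleton_le_iff_mem]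
    exact Ideal.pow_mem_pow hτI n
  have hpow : ∀ n, I ^ n ≤ Ideal.span {τ ^ n} ⊔ I ^ (n + 1) := by
    intro n
    induction n with
    | zero => simp
    | succ n ih =>
      calc I ^ (n + 1) = I ^ n * I := pow_succ _ _
        _ ≤ (Ideal.span {τ ^ n} ⊔ I ^ (n + 1)) * (Ideal.span {τ} ⊔ I ^ 2) := Ideal.mul_mono ih hτ
        _ ≤ Ideal.span {τ ^ (n + 1)} ⊔ I ^ (n + 2) := by
          rw [Ideal.sup_mul, Ideal.mul_sup, Ideal.span_singleton_mul_span_singleton, ← pow_succ]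
          refine sup_le (sup_le le_sup_left (le_sup_of_le_right ?_)) (le_sup_of_le_right ?_)
          · rw [pow_add]
            exact Ideal.mul_mono_left (hτn n)
          · rw [pow_succ I (n + 1)]
            refine Ideal.mul_mono_right (sup_le ?_ (Ideal.pow_le_self two_ne_zero))
            rwa [Ideal.span_singleton_le_iff_mem]
  have hQs : Q ≤ Ideal.span {s} ⊔ I * Q := by
    intro z hz
    have : z = z * s + i * z := by rw [mul_comm z s, ← add_mul, add_comm s, his, one_mul]
    rw [this]
    exact add_mem (Ideal.mem_sup_left (Ideal.mul_mem_left _ _ (Ideal.mem_span_singleton_self s)))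
      (Ideal.mem_sup_right (Ideal.mul_mem_mul hi hz))
  have hsQ : Ideal.span {s} ≤ Q := (Ideal.span_singleton_le_iff_mem _).2 hs
  refine ⟨τ ^ n * s, Ideal.mul_mem_mul (Ideal.pow_mem_pow hτI n) hs, (Ideal.mul_mono (hpow n) hQs).trans ?_⟩
  rw [Ideal.sup_mul, Ideal.mul_sup, Ideal.span_singleton_mul_span_singleton]
  refine sup_le (sup_le le_sup_left (le_sup_of_le_right ?_)) (le_sup_of_le_right ?_)
  · rw [pow_succ, mul_assoc]
    exact Ideal.mul_mono_left (hτn n)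
  · exact Ideal.mul_mono_right (sup_le hsQ Ideal.mul_le_right)

variable [Fintype ι]

/-- A subspace of `K ⊗ V` consisting of all elements which vanish along `n x_i + ∑ n_j x_j`
contains an element which does not vanish along `(n + 1) x_i + ∑ n_j x_j`. -/
theorem not_le_pow_succ_mul [CharZero k] [IsDomain (K ⊗[k] A)] {κ : Type*} [Fintype κ]
    [DecidableEq ι] (h : IsGenericFamily σ) {a : κ → A} (ha : LinearIndependent k a) (i : ι)
    (m : ι → ℕ) (n : ℕ) {y₀ : κ → K} (hy₀ : y₀ ≠ 0)
    (hmem : ∑ j, y₀ j ⊗ₜ[k] a j ∈ pointIdeal (σ i) ^ n *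
      ∏ j ∈ Finset.univ.erase i, pointIdeal (σ j) ^ m j) :
    ∃ y : κ → K, ∑ j, y j ⊗ₜ[k] a j ∈ pointIdeal (σ i) ^ n *
        ∏ j ∈ Finset.univ.erase i, pointIdeal (σ j) ^ m j ∧
      ∑ j, y j ⊗ₜ[k] a j ∉ pointIdeal (σ i) ^ (n + 1) *
        ∏ j ∈ Finset.univ.erase i, pointIdeal (σ j) ^ m j := by
  by_contra! hcon
  obtain ⟨R, hR, hinj⟩ := h i
  set Q := ∏ j ∈ Finset.univ.erase i, pointIdeal (σ j) ^ m j with hQ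
  obtain ⟨y, hy, hyN, hyD⟩ := exists_sum_tmul_mem_of_stable a
    {D : Derivation k K K | ∀ x ∈ R, D x = 0}
    ((pointIdeal (σ i) ^ n * Q).restrictScalars K)
    (fun D hD y hy => by
      rw [← tensorDer_sum]
      refine derivation_mem_pow_mul (tensorDer D) ?_ n _ (hcon y hy)
      refine derivation_mem_prod _ _ fun j hj => derivation_mem_pow _ ?_ _
      exact tensorDer_mem_pointIdeal fun a => hD _ (hR j (Finset.ne_of_mem_erase hj) a))
    hy₀ hmem
  have : CharZero K := charZero_of_injective_algebraMap (algebraMap k K).injective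
  have halg : ∀ j, IsAlgebraic R (y j) := fun j =>
    isAlgebraic_of_forall_derivation_eq_zero _ fun D =>
      hyD (D.restrictScalars k) (fun x hx => D.map_algebraMap ⟨x, hx⟩) j
  refine evalAt_ne_zero_of_isAlgebraic hinj halg (sum_tmul_ne_zero ha hy) ?_
  have h1 := hcon y hyN
  rw [pow_succ', mul_assoc] at h1
  exact Ideal.mul_le_left (I := pointIdeal (σ i)) h1

/-- The space `W` of combinations of the `1 ⊗ a j` is in general position with respect to the
ideal of a divisor supported at generic points. -/
theorem disjoint_or_codisjoint [CharZero k] [IsDomain (K ⊗[k] A)] [IsDomain A] {κ : Type*}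
    [Fintype κ] (h : IsGenericFamily σ) {t : A}
    (ht : ∀ a : A, IsAlgebraic (Algebra.adjoin k {t}) a)
    {a : κ → A} (ha : LinearIndependent k a) (m : ι → ℕ) :
    (∀ y : κ → K, ∑ j, y j ⊗ₜ[k] a j ∈ ∏ i, pointIdeal (σ i) ^ m i → y = 0) ∨
      (∀ x : K ⊗[k] A, ∃ y : κ → K, x - ∑ j, y j ⊗ₜ[k] a j ∈ ∏ i, pointIdeal (σ i) ^ m i) := by
  classical
  by_cases hA : Function.Surjective (algebraMap k A)
  · by_cases hJ : ∏ i, pointIdeal (σ i) ^ m i = ⊤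
    · exact Or.inr fun x => ⟨0, by rw [hJ]; trivial⟩
    · refine Or.inl fun y hy => ?_
      by_contra hy0
      refine hJ (Ideal.eq_top_of_isUnit_mem _ hy ?_)
      have hsurj : ∀ x : K ⊗[k] A, ∃ c, algebraMap K (K ⊗[k] A) c = x := by
        intro x
        induction x with
        | zero => exact ⟨0, map_zero _⟩
        | add x y hx hy =>
          obtain ⟨c, rfl⟩ := hx
          obtain ⟨d, rfl⟩ := hy
          exact ⟨c + d, map_add _ _ _⟩
        | tmul c a =>
          obtain ⟨d, rfl⟩ := hA a
          refine ⟨d • c, ?_⟩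
          rw [Algebra.TensorProduct.algebraMap_apply, Algebra.algebraMap_self, RingHom.id_apply,
            TensorProduct.smul_tmul, Algebra.algebraMap_eq_smul_one]
      have hne := sum_tmul_ne_zero ha hy0
      obtain ⟨c, hc⟩ := hsurj (∑ j, y j ⊗ₜ[k] a j)
      rw [← hc] at hne ⊢
      exact (IsUnit.mk0 c (by rintro rfl; simp at hne)).map _
  · rw [Function.Surjective] at hA
    push Not at hA
    obtain ⟨a₀, ha₀⟩ := hA
    have hne : ∀ i j, i ≠ j → σ i ≠ σ j := fun i j =>
      h.ne (a := a₀) (by rintro ⟨c, hc⟩; exact ha₀ c hc)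
    induction hs : ∑ i, m i generalizing m with
    | zero =>
      have hm : ∀ i, m i = 0 := by simpa using hs
      exact Or.inr fun x => ⟨0, by simp [hm, -Ideal.one_eq_top]⟩
    | succ s ih =>
      obtain ⟨i, hi⟩ : ∃ i, m i ≠ 0 := by
        by_contra! h0
        simp [h0] at hs
      obtain ⟨n, hn⟩ := Nat.exists_eq_succ_of_ne_zero hi
      set m' := Function.update m i n with hm'
      have hsum : ∑ j, m' j = s := by
        rw [← Finset.add_sum_erase _ _ (Finset.mem_univ i)] at hs ⊢
        have : ∑ j ∈ Finset.univ.erase i, m' j = ∑ j ∈ Finset.univ.erase i, m j :=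
          Finset.sum_congr rfl fun j hj => by
            rw [hm', Function.update_of_ne (Finset.ne_of_mem_erase hj)]
        rw [this, hm', Function.update_self]
        omega
      set Q := ∏ j ∈ Finset.univ.erase i, pointIdeal (σ j) ^ m j with hQ
      have hJ : ∏ j, pointIdeal (σ j) ^ m j = pointIdeal (σ i) ^ (n + 1) * Q := by
        rw [← Finset.mul_prod_erase _ _ (Finset.mem_univ i), hn]
      have hJ' : ∏ j, pointIdeal (σ j) ^ m' j = pointIdeal (σ i) ^ n * Q := by
        rw [← Finset.mul_prod_erase _ _ (Finset.mem_univ i), hm', Function.update_self]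
        congr 1
        exact Finset.prod_congr rfl fun j hj => by
          rw [Function.update_of_ne (Finset.ne_of_mem_erase hj)]
      have hle : pointIdeal (σ i) ^ (n + 1) * Q ≤ pointIdeal (σ i) ^ n * Q :=
        Ideal.mul_mono_left (Ideal.pow_le_pow_right n.le_succ)
      have ih' := ih m' hsum
      rw [hJ'] at ih'
      rw [hJ]
      rcases ih' with ih' | ih'
      · exact Or.inl fun y hy => ih' y (hle hy)
      · by_cases hN : ∀ y : κ → K, ∑ j, y j ⊗ₜ[k] a j ∈ pointIdeal (σ i) ^ n * Q → y = 0
        · exact Or.inl fun y hy => hN y (hle hy)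
        · push Not at hN
          obtain ⟨y₀, hy₀, hy₀'⟩ := hN
          obtain ⟨w, hw, hw'⟩ := not_le_pow_succ_mul h ha i m n hy₀' hy₀
          have hcop : IsCoprime (pointIdeal (σ i)) Q := by
            rw [hQ]
            refine IsCoprime.prod_right fun j hj => IsCoprime.pow_right ?_
            exact isCoprime_pointIdeal (hne i j (Finset.ne_of_mem_erase hj).symm)
          obtain ⟨q, hqJ, hq⟩ := exists_pow_mul_le_span_sup (delta_mem (σ i) t)
            (pointIdeal_le_span_sup_sq (h.injective i) ht) hcop n
          have hqc : ∀ x ∈ pointIdeal (σ i) ^ n * Q, ∃ c : K,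
              x - c • q ∈ pointIdeal (σ i) ^ (n + 1) * Q := by
            intro x hx
            obtain ⟨z, hz, w, hw, rfl⟩ := Submodule.mem_sup.1 (hq hx)
            obtain ⟨b, rfl⟩ := Ideal.mem_span_singleton'.1 hz
            refine ⟨evalAt (σ i) b, ?_⟩
            rw [add_sub_right_comm, Algebra.smul_def, ← sub_mul]
            refine add_mem ?_ hw
            rw [pow_succ', mul_assoc]
            exact Ideal.mul_mem_mul (sub_evalAt_mem_pointIdeal _ b) hqJ
          obtain ⟨c, hc⟩ := hqc _ hw
          have hc0 : c ≠ 0 := by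
            rintro rfl
            exact hw' (by simpa using hc)
          refine Or.inr fun x => ?_
          obtain ⟨y, hy⟩ := ih' x
          obtain ⟨d, hd⟩ := hqc _ hy
          refine ⟨y + (d * c⁻¹) • w, ?_⟩
          have h1 := sub_mem hd (Submodule.smul_of_tower_mem _ (d * c⁻¹) hc)
          convert h1 using 1
          have h2 : ∑ j, (y + (d * c⁻¹) • w) j ⊗ₜ[k] a j =
              ∑ j, y j ⊗ₜ[k] a j + (d * c⁻¹) • ∑ j, w j ⊗ₜ[k] a j := by
            rw [Finset.smul_sum, ← Finset.sum_add_distrib]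
            refine Finset.sum_congr rfl fun j _ => ?_
            rw [TensorProduct.smul_tmul', Pi.add_apply, TensorProduct.add_tmul, Pi.smul_apply]
          rw [h2, smul_sub, smul_smul, mul_assoc, inv_mul_cancel₀ hc0, mul_one]
          abel

end Generic

section KrullDimension

/-- An integral extension of a ring has Krull dimension at most one only if the ring has. -/
theorem ringKrullDim_le_one_of_isIntegral {R S : Type*} [CommRing R] [CommRing S] [Algebra R S]
    [FaithfulSMul R S] [Algebra.IsIntegral R S] (h : ringKrullDim S ≤ 1) : ringKrullDim R ≤ 1 := by
  refine Order.krullDim_le_one_iff.2 fun P => ?_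
  by_contra! hP
  obtain ⟨P₀, hP₀⟩ := not_isMin_iff.1 hP.1
  obtain ⟨P₂, hP₂⟩ := not_isMax_iff.1 hP.2
  obtain ⟨Q₀, -, hQ₀, hQP₀⟩ := Ideal.exists_ideal_over_prime_of_isIntegral P₀.asIdeal
    (⊥ : Ideal S) (by
      rw [← RingHom.ker_eq_comap_bot, (RingHom.injective_iff_ker_eq_bot _).1
        (FaithfulSMul.algebraMap_injective R S)]
      exact bot_le)
  obtain ⟨Q₁, hle₁, hQ₁, hQP₁⟩ := Ideal.exists_ideal_over_prime_of_isIntegral P.asIdeal Q₀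
    (by rw [hQP₀]; exact hP₀.le)
  obtain ⟨Q₂, hle₂, hQ₂, hQP₂⟩ := Ideal.exists_ideal_over_prime_of_isIntegral P₂.asIdeal Q₁
    (by rw [hQP₁]; exact hP₂.le)
  rcases Order.krullDim_le_one_iff.1 h ⟨Q₁, hQ₁⟩ with hmin | hmax
  · have h1 : Q₁ ≤ Q₀ := hmin (b := ⟨Q₀, hQ₀⟩) hle₁
    refine hP₀.not_ge (show P.asIdeal ≤ P₀.asIdeal from ?_)
    rw [← hQP₁, ← hQP₀]
    exact Ideal.comap_mono h1
  · have h1 : Q₂ ≤ Q₁ := hmax (b := ⟨Q₂, hQ₂⟩) hle₂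
    refine hP₂.not_ge (show P₂.asIdeal ≤ P.asIdeal from ?_)
    rw [← hQP₁, ← hQP₂]
    exact Ideal.comap_mono h1

/-- A finitely generated algebra of dimension at most one over a field is algebraic over
a subalgebra generated by one element. -/
theorem exists_forall_isAlgebraic_adjoin (k A : Type*) [Field k] [CommRing A] [IsDomain A]
    [Algebra k A] [Algebra.FiniteType k A] (h : ringKrullDim A ≤ 1) :
    ∃ t : A, ∀ a : A, IsAlgebraic (Algebra.adjoin k {t}) a := by
  obtain ⟨s, g, hg, hg_int⟩ := exists_integral_inj_algHom_of_fg k A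
  have hs : s ≤ 1 := by
    let : Algebra (MvPolynomial (Fin s) k) A := g.toRingHom.toAlgebra
    have : FaithfulSMul (MvPolynomial (Fin s) k) A :=
      (faithfulSMul_iff_algebraMap_injective _ _).2 hg
    have : Algebra.IsIntegral (MvPolynomial (Fin s) k) A := ⟨hg_int⟩
    have h1 := ringKrullDim_le_one_of_isIntegral (R := MvPolynomial (Fin s) k) h
    have h2 := ringKrullDim_add_natCard_le_ringKrullDim_mvPolynomial (R := k) (Fin s)
    rw [ringKrullDim_eq_zero_of_field, zero_add, Nat.card_eq_fintype_card, Fintype.card_fin] at h2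
    exact_mod_cast h2.trans h1
  let t : A := if hs0 : 0 < s then g (MvPolynomial.X ⟨0, hs0⟩) else 0
  refine ⟨t, fun a => ?_⟩
  have hrange : g.range ≤ Algebra.adjoin k {t} := by
    rw [← Algebra.map_top, ← MvPolynomial.adjoin_range_X, AlgHom.map_adjoin]
    refine Algebra.adjoin_mono ?_
    rintro _ ⟨_, ⟨i, rfl⟩, rfl⟩
    have h0 : 0 < s := i.pos
    have hi : i = ⟨0, h0⟩ := Fin.ext (by have := i.2; simp; omega)
    simp [t, h0, hi]
  obtain ⟨p, hp, hp0⟩ := hg_int a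
  refine IsIntegral.isAlgebraic ?_
  let f : MvPolynomial (Fin s) k →+* Algebra.adjoin k {t} :=
    ((Subalgebra.inclusion hrange).comp g.rangeRestrict).toRingHom
  refine ⟨p.map f, hp.map _, ?_⟩
  rw [Polynomial.eval₂_map]
  exact hp0

end KrullDimension

section GenericStep

variable {k A K L : Type*} [Field k] [CommRing A] [Algebra k A] [Field K] [Algebra k K]
  [Field L] [Algebra k L]

theorem productMap_range_injective {S : Type*} [CommRing S] [Algebra k S] {f : S →ₐ[k] L}
    {g : A →ₐ[k] L} (h : Function.Injective (Algebra.TensorProduct.productMap f g)) :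
    Function.Injective (Algebra.TensorProduct.productMap f.range.val g) := by
  refine (injective_iff_map_eq_zero _).2 fun z hz => ?_
  obtain ⟨z, rfl⟩ := TensorProduct.map_surjective (g := f.rangeRestrict.toLinearMap)
    f.rangeRestrict_surjective (g' := (LinearMap.id : A →ₗ[k] A)) Function.surjective_id z
  have h1 : Algebra.TensorProduct.productMap f.range.val g
      (TensorProduct.map f.rangeRestrict.toLinearMap LinearMap.id z) =
      Algebra.TensorProduct.productMap f g z := by
    clear hz
    induction z with
    | zero => simp
    | add x y hx hy => rw [map_add, map_add, map_add, hx, hy]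
    | tmul c a => simp
  rw [h1] at hz
  rw [h (hz.trans (map_zero _).symm), map_zero]

theorem productMap_productMap_injective {S : Type*} [CommRing S] [Algebra k S] {s : S →ₐ[k] K}
    {ρ : A →ₐ[k] K} {τ : K →ₐ[k] L} {σ₀ : A →ₐ[k] L}
    (h₁ : Function.Injective (Algebra.TensorProduct.productMap s ρ))
    (h₂ : Function.Injective (Algebra.TensorProduct.productMap τ σ₀)) :
    Function.Injective (Algebra.TensorProduct.productMap
      (Algebra.TensorProduct.productMap (τ.comp s) σ₀) (τ.comp ρ)) := by
  have h3 : Function.Injective ((Algebra.TensorProduct.productMap s ρ).toLinearMap.rTensor A) :=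
    Module.Flat.rTensor_preserves_injective_linearMap _ h₁
  have key : ∀ z, Algebra.TensorProduct.productMap
      (Algebra.TensorProduct.productMap (τ.comp s) σ₀) (τ.comp ρ) z =
      Algebra.TensorProduct.productMap τ σ₀
        ((Algebra.TensorProduct.productMap s ρ).toLinearMap.rTensor A
          (TensorProduct.rightComm k S A A z)) := by
    intro z
    induction z with
    | zero => simp
    | add x y hx hy => simp only [map_add, hx, hy]
    | tmul c b =>
      induction c with
      | zero => simp
      | add x y hx hy => simp only [TensorProduct.add_tmul, map_add, hx, hy]
      | tmul c a =>
        simp only [Algebra.TensorProduct.productMap_apply_tmul, AlgHom.comp_apply,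
          TensorProduct.rightComm_tmul, LinearMap.rTensor_tmul, AlgHom.toLinearMap_apply, map_mul]
        ring
  intro x y hxy
  rw [key, key] at hxy
  exact (TensorProduct.rightComm k S A A).injective (h3 (h₂ hxy))

/-- A point which is generic over `K` together with a generic family of `K`-points is a generic
family. -/
theorem IsGenericFamily.cons {r : ℕ} {σ : Fin r → A →ₐ[k] K} (h : IsGenericFamily σ)
    (τ : K →ₐ[k] L) (σ₀ : A →ₐ[k] L)
    (hinj : Function.Injective (Algebra.TensorProduct.productMap τ σ₀)) :
    IsGenericFamily (Fin.cons σ₀ (fun i => τ.comp (σ i)) : Fin (r + 1) → A →ₐ[k] L) := by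
  intro i
  refine Fin.cases ?_ (fun i => ?_) i
  · refine ⟨τ.range, fun j hj a => ?_, ?_⟩
    · obtain ⟨j, rfl⟩ := Fin.exists_succ_eq.2 hj
      rw [Fin.cons_succ]
      exact ⟨σ j a, rfl⟩
    · rw [Fin.cons_zero]
      exact productMap_range_injective hinj
  · obtain ⟨R, hR, hRinj⟩ := h i
    refine ⟨(Algebra.TensorProduct.productMap (τ.comp R.val) σ₀).range, fun j hj a => ?_, ?_⟩
    · revert hj
      refine Fin.cases (fun _ => ?_) (fun j hj => ?_) j
      · rw [Fin.cons_zero]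
        exact ⟨1 ⊗ₜ a, by simp⟩
      · rw [Fin.cons_succ]
        exact ⟨(⟨σ j a, hR j (fun h => hj (by rw [h])) a⟩ : R) ⊗ₜ 1, by simp⟩
    · rw [Fin.cons_succ]
      exact productMap_range_injective (productMap_productMap_injective hRinj hinj)

end GenericStep

section Projective

attribute [local instance] MvPolynomial.gradedAlgebra

theorem algebraMap_homogeneousSubmodule_zero_surjective (k : Type u) [Field k] (n : ℕ) :
    Function.Surjective (algebraMap k (MvPolynomial.homogeneousSubmodule (Fin (n + 1)) k 0)) := by
  rintro ⟨p, hp⟩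
  rw [MvPolynomial.mem_homogeneousSubmodule] at hp
  have := MvPolynomial.totalDegree_eq_zero_iff_eq_C.1 (Nat.le_zero.1 hp.totalDegree_le)
  exact ⟨p.coeff 0, Subtype.ext this.symm⟩

instance (k : Type u) [Field k] (n : ℕ) : LocallyOfFiniteType (projSpaceStr k n) := by
  have hsurj := algebraMap_homogeneousSubmodule_zero_surjective k n
  have : IsScalarTower k (MvPolynomial.homogeneousSubmodule (Fin (n + 1)) k 0)
    (MvPolynomial (Fin (n + 1)) k) :=
    ⟨fun a b c => smul_mul_assoc a (b : MvPolynomial (Fin (n + 1)) k) c⟩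
  have : Algebra.FiniteType (MvPolynomial.homogeneousSubmodule (Fin (n + 1)) k 0)
    (MvPolynomial (Fin (n + 1)) k) := Algebra.FiniteType.of_restrictScalars_finiteType k _ _
  have : LocallyOfFiniteType (Spec.map (CommRingCat.ofHom
      (algebraMap k (MvPolynomial.homogeneousSubmodule (Fin (n + 1)) k 0)))) := by
    have : IsClosedImmersion (Spec.map (CommRingCat.ofHom
      (algebraMap k (MvPolynomial.homogeneousSubmodule (Fin (n + 1)) k 0)))) :=
     IsClosedImmersion.spec_of_surjective _ hsurj
    infer_instance
  unfold projSpaceStr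
  infer_instance

end Projective

section Geometric

variable {k : Type u} [Field k] {C : Scheme.{u}} {f : C ⟶ Spec (.of k)}

theorem IsQuasiProjective.locallyOfFiniteType (h : IsQuasiProjective f) :
    LocallyOfFiniteType f := by
  obtain ⟨n, i, hi, rfl⟩ := h
  infer_instance

theorem geometricallyReduced_of_charZero [CharZero k] [IsIntegral C] :
    GeometricallyReduced f := by
  refine ⟨geometrically_iff_of_commRing_of_isClosedUnderIsomorphisms.2 fun K _ _ => ?_⟩
  let 𝒱 := C.affineOpenCover
  let 𝒰 := Scheme.Pullback.openCoverOfLeft 𝒱.openCover f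
    (Spec.map (CommRingCat.ofHom (algebraMap k K)))
  have h𝒰 : ∀ i, IsReduced (𝒰.X i) := fun i => by
    change IsReduced (pullback (𝒱.f i ≫ f) (Spec.map (CommRingCat.ofHom (algebraMap k K))))
    obtain ⟨φ, hφ⟩ := Spec.map_surjective (𝒱.f i ≫ f)
    rw [← hφ]
    let R : CommRingCat := 𝒱.X i
    let : Algebra k R := φ.hom.toAlgebra
    have : _root_.IsReduced (R ⊗[k] K) := by
      rcases isEmpty_or_nonempty (Spec R) with hR | hR
      · have : Subsingleton R := PrimeSpectrum.isEmpty_iff_subsingleton.1 hR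
        infer_instance
      · have : IsIntegral (Spec R) := by
          have : IsOpenImmersion (𝒱.f i) := C.affineOpenCover.map_prop i
          exact isIntegral_of_isOpenImmersion (𝒱.f i)
        have : IsDomain R := (affine_isIntegral_iff R).1 this
        have : _root_.IsReduced (K ⊗[k] R) := isReduced_tensorProduct
        exact isReduced_of_injective (Algebra.TensorProduct.comm k R K)
          (Algebra.TensorProduct.comm k R K).injective
    exact isReduced_of_isOpenImmersion (pullbackSpecIso k R K).hom
  exact IsReduced.of_openCover _ 𝒰

theorem isIntegral_of_geometricallyIrreducible [GeometricallyIrreducible f] [IsReduced C] :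
    IsIntegral C := by
  have : IrreducibleSpace C :=
    GeometricallyIrreducible.irreducibleSpace_of_subsingleton f
  exact isIntegral_of_irreducibleSpace_of_isReduced C

theorem geometricallyIntegral_of_charZero [CharZero k] [GeometricallyIrreducible f]
    [IsReduced C] : GeometricallyIntegral f := by
  have : IsIntegral C := isIntegral_of_geometricallyIrreducible (f := f)
  have : GeometricallyReduced f := geometricallyReduced_of_charZero
  exact .of_geometricallyReduced_of_geometricallyIrreducible f

/-- The fibre products `C × ⋯ × C` are locally of finite type over `k`. -/
instance (r : ℕ) [LocallyOfFiniteType f] : LocallyOfFiniteType (power f r).hom := by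
  induction r with
  | zero => exact inferInstanceAs (LocallyOfFiniteType (𝟙 _))
  | succ r ih => exact inferInstanceAs (LocallyOfFiniteType (pullback.fst f (power f r).hom ≫ f))

instance (r : ℕ) [LocallyOfFiniteType f] : IsLocallyNoetherian (power f r).left :=
  LocallyOfFiniteType.isLocallyNoetherian (power f r).hom

instance isIntegral_power [LocallyOfFiniteType f] [GeometricallyIntegral f] (r : ℕ) :
    IsIntegral (power f r).left := by
  induction r with
  | zero => exact inferInstanceAs (IsIntegral (Spec (CommRingCat.of k)))
  | succ r ih => exact inferInstanceAs (IsIntegral (pullback f (power f r).hom))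

end Geometric

section
variable {k R K A L : Type*} [Field k] [CommRing R] [Field K] [CommRing A] [Field L]
  [Algebra k R] [Algebra k K] [Algebra k A] [Algebra k L] [Algebra R K] [IsScalarTower k R K]
  [IsFractionRing R K]

theorem exists_mul_eq_map_fractionRing (z : K ⊗[k] A) :
    ∃ s ∈ nonZeroDivisors R, ∃ y : R ⊗[k] A, (algebraMap R K s ⊗ₜ[k] (1 : A)) * z =
      Algebra.TensorProduct.map (IsScalarTower.toAlgHom k R K) (AlgHom.id k A) y := by
  induction z with
  | zero => exact ⟨1, one_mem _, 0, by simp⟩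
  | tmul x a =>
    obtain ⟨⟨b, s⟩, hs⟩ := IsLocalization.surj (nonZeroDivisors R) x
    refine ⟨s, s.2, b ⊗ₜ a, ?_⟩
    simp [← hs, mul_comm]
  | add z w hz hw =>
    obtain ⟨s, hs, y, hy⟩ := hz
    obtain ⟨t, ht, y', hy'⟩ := hw
    refine ⟨s * t, mul_mem hs ht, (t ⊗ₜ 1) * y + (s ⊗ₜ 1) * y', ?_⟩
    rw [map_add, map_mul _ (t ⊗ₜ 1), map_mul _ (s ⊗ₜ 1), ← hy, ← hy']
    simp only [Algebra.TensorProduct.map_tmul, map_one, IsScalarTower.coe_toAlgHom', map_mul]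
    rw [mul_add, ← mul_assoc, ← mul_assoc]
    simp [mul_comm]

theorem productMap_injective_of_isFractionRing (τ : K →ₐ[k] L) (σ : A →ₐ[k] L)
    (h : Function.Injective (Algebra.TensorProduct.productMap
      (τ.comp (IsScalarTower.toAlgHom k R K)) σ)) :
    Function.Injective (Algebra.TensorProduct.productMap τ σ) := by
  rw [injective_iff_map_eq_zero]
  intro z hz
  obtain ⟨s, hs, y, hy⟩ := exists_mul_eq_map_fractionRing (R := R) z
  have hcomp : (Algebra.TensorProduct.productMap τ σ).comp (Algebra.TensorProduct.map
      (IsScalarTower.toAlgHom k R K) (AlgHom.id k A)) =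
      Algebra.TensorProduct.productMap (τ.comp (IsScalarTower.toAlgHom k R K)) σ := by
    ext <;> simp
  have hy0 : y = 0 := by
    apply h
    rw [map_zero, ← hcomp, AlgHom.comp_apply, ← hy, map_mul, hz, mul_zero]
  have : Nontrivial R := (IsFractionRing.nontrivial_iff_nontrivial R K).2 inferInstance
  have hs0 : algebraMap R K s ≠ 0 := IsLocalization.to_map_ne_zero_of_mem_nonZeroDivisors K le_rfl hs
  rw [hy0, map_zero] at hy
  calc z = ((algebraMap R K s)⁻¹ ⊗ₜ 1) * ((algebraMap R K s ⊗ₜ 1) * z) := by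
        rw [← mul_assoc]; simp [hs0, ← Algebra.TensorProduct.one_def]
    _ = 0 := by rw [hy, mul_zero]
end

section
variable {k : Type u} [Field k] {C : Scheme.{u}} {f : C ⟶ Spec (.of k)}

theorem Spec_map_toGenericField [GeometricallyIrreducible f] (r : ℕ) :
    Spec.map (CommRingCat.ofHom (algebraMap k (genericField f r))) =
      genericPt f r ≫ (power f r).hom :=
  Spec.map_preimage _

end

theorem exists_stalk_hom {X : Scheme.{u}} {L : CommRingCat.{u}} [IsLocalRing L] (g : Spec L ⟶ X)
    (x : X) (h : g (IsLocalRing.closedPoint L) = x) :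
    ∃ τ : X.presheaf.stalk x ⟶ L, Spec.map τ ≫ X.fromSpecStalk x = g := by
  subst h
  exact ⟨Scheme.stalkClosedPointTo g, Scheme.Spec_stalkClosedPointTo_fromSpecStalk g⟩

theorem exists_lift_Spec {X : Scheme.{u}} {A L : CommRingCat.{u}} (j : Spec A ⟶ X)
    [IsOpenImmersion j] (g : Spec L ⟶ X) (h : Set.range g ⊆ Set.range j) :
    ∃ σ : A ⟶ L, Spec.map σ ≫ j = g :=
  ⟨Spec.preimage (IsOpenImmersion.lift j g h), by
    rw [Spec.map_preimage, IsOpenImmersion.lift_fac]⟩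

theorem mem_range_of_isOpenImmersion {X Y : Scheme.{u}} (q : Y ⟶ X) [IsOpenImmersion q]
    [IrreducibleSpace X] [Nonempty Y] : genericPoint X ∈ Set.range q :=
  ((genericPoint_spec X).mem_open_set_iff q.isOpenEmbedding.isOpen_range).2
    (by simpa using Set.range_nonempty q)

theorem genericPoint_of_surjective {X Y : Scheme.{u}} (q : X ⟶ Y) [Surjective q]
    [IrreducibleSpace X] [IrreducibleSpace Y] : q (genericPoint X) = genericPoint Y := by
  apply ((genericPoint_spec Y).eq _).symm
  convert! (genericPoint_spec X).image q.continuous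
  rw [Set.image_univ, q.surjective.range_eq, closure_univ]

/-- The coordinate ring of a nonempty affine open of an integral scheme embeds into the function
field. -/
theorem injective_of_map_genericPoint {X : Scheme.{u}} [IsIntegral X] {R : CommRingCat.{u}}
    (q : Spec R ⟶ X) [IsOpenImmersion q] [Nonempty (Spec R)] (ψ : R ⟶ X.functionField)
    (hψ : Spec.map ψ ≫ q = X.fromSpecStalk (genericPoint X)) : Function.Injective ψ := by
  have hI : IsIntegral (Spec R) := isIntegral_of_isOpenImmersion q
  have : IsDomain R := (affine_isIntegral_iff R).1 hI
  let c : Spec X.functionField := IsLocalRing.closedPoint X.functionField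
  have h1 : Spec.map ψ c = genericPoint (Spec R) := by
    apply q.isOpenEmbedding.injective
    rw [genericPoint_eq_of_isOpenImmersion, ← Scheme.Hom.comp_apply, hψ]
    exact Scheme.fromSpecStalk_closedPoint
  rw [genericPoint_eq_bot_of_affine] at h1
  rw [injective_iff_map_eq_zero]
  intro a ha
  have h2 : (Spec.map ψ c).asIdeal = ⊥ := congrArg PrimeSpectrum.asIdeal h1
  have h3 : a ∈ (Spec.map ψ c).asIdeal := by
    refine Ideal.mem_comap.2 ?_
    rw [show ψ.hom a = 0 from ha]
    exact zero_mem _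
  rwa [h2] at h3

section

variable {k : Type u} [CommRing k] {C P : Scheme.{u}} {f : C ⟶ Spec (.of k)} {p : P ⟶ Spec (.of k)}
  {A R : Type u} [CommRing A] [Algebra k A] [CommRing R] [Algebra k R]
  {j : Spec (.of A) ⟶ C} (hj : j ≫ f = Spec.map (CommRingCat.ofHom (algebraMap k A)))
  {w : Spec (.of R) ⟶ P} (hw : w ≫ p = Spec.map (CommRingCat.ofHom (algebraMap k R)))

/-- The morphism `Spec (R ⊗ A) ⟶ C × P` induced by `Spec A ⟶ C` and `Spec R ⟶ P`. -/
noncomputable def tensorToPullback : Spec (.of (R ⊗[k] A)) ⟶ pullback f p :=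
  pullback.lift (Spec.map (CommRingCat.ofHom
      (Algebra.TensorProduct.includeRight (R := k) (A := R) (B := A)).toRingHom) ≫ j)
    (Spec.map (CommRingCat.ofHom Algebra.TensorProduct.includeLeftRingHom) ≫ w) (by
      rw [Category.assoc, Category.assoc, hj, hw, ← Spec.map_comp, ← Spec.map_comp,
        ← CommRingCat.ofHom_comp, ← CommRingCat.ofHom_comp]
      congr 2
      ext x
      exact (Algebra.TensorProduct.includeRight (R := k) (A := R) (B := A)).commutes x)

theorem tensorToPullback_fst : tensorToPullback hj hw ≫ pullback.fst f p =
    Spec.map (CommRingCat.ofHom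
      (Algebra.TensorProduct.includeRight (R := k) (A := R) (B := A)).toRingHom) ≫ j :=
  pullback.lift_fst _ _ _

theorem tensorToPullback_snd : tensorToPullback hj hw ≫ pullback.snd f p =
    Spec.map (CommRingCat.ofHom Algebra.TensorProduct.includeLeftRingHom) ≫ w :=
  pullback.lift_snd _ _ _

instance isOpenImmersion_tensorToPullback [IsOpenImmersion j] [IsOpenImmersion w] :
    IsOpenImmersion (tensorToPullback hj hw) := by
  have : tensorToPullback hj hw = (pullbackSpecIso k R A).inv ≫ (pullbackSymmetry _ _).hom ≫
      pullback.map _ _ f p j w (𝟙 _) (by rw [hj, Category.comp_id])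
        (by rw [hw, Category.comp_id]) := by
    apply pullback.hom_ext
    · rw [tensorToPullback_fst]
      rw [Category.assoc, Category.assoc, pullback.map, pullback.lift_fst,
        pullbackSymmetry_hom_comp_fst_assoc, pullbackSpecIso_inv_snd_assoc]
      rfl
    · rw [tensorToPullback_snd]
      rw [Category.assoc, Category.assoc, pullback.map, pullback.lift_snd,
        pullbackSymmetry_hom_comp_snd_assoc, pullbackSpecIso_inv_fst_assoc]
  rw [this]
  infer_instance

end

section
variable {k : Type u} [Field k] {C P : Scheme.{u}} {f : C ⟶ Spec (.of k)} {p : P ⟶ Spec (.of k)}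
  {A R : Type u} [CommRing A] [Algebra k A] [CommRing R] [Algebra k R]
  {j : Spec (.of A) ⟶ C} {w : Spec (.of R) ⟶ P}
  [IsOpenImmersion j] [IsOpenImmersion w] [Nontrivial A] [Nontrivial R]
  [IsIntegral (pullback f p)]

theorem range_fromSpecStalk_subset {X Y : Scheme.{u}} [IsIntegral X] (q : Y ⟶ X)
    [IsOpenImmersion q] [Nonempty Y] :
    Set.range (X.fromSpecStalk (genericPoint X)) ⊆ Set.range q := by
  rintro _ ⟨x, rfl⟩
  obtain rfl : x = IsLocalRing.closedPoint X.functionField :=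
    Subsingleton.elim (α := PrimeSpectrum X.functionField) _ _
  have := mem_range_of_isOpenImmersion q
  rwa [← Scheme.fromSpecStalk_closedPoint (x := genericPoint X)] at this

theorem productMap_injective_of_isOpenImmersion
    (hj : j ≫ f = Spec.map (CommRingCat.ofHom (algebraMap k A)))
    (hw : w ≫ p = Spec.map (CommRingCat.ofHom (algebraMap k R)))
    [Algebra k (pullback f p).functionField]
    (τ : R →ₐ[k] (pullback f p).functionField)
    (hτ : Spec.map (CommRingCat.ofHom τ.toRingHom) ≫ w =
      (pullback f p).fromSpecStalk (genericPoint _) ≫ pullback.snd f p)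
    (σ : A →ₐ[k] (pullback f p).functionField)
    (hσ : Spec.map (CommRingCat.ofHom σ.toRingHom) ≫ j =
      (pullback f p).fromSpecStalk (genericPoint _) ≫ pullback.fst f p) :
    Function.Injective (Algebra.TensorProduct.productMap τ σ) := by
  have : Nonempty (Spec (.of (R ⊗[k] A))) :=
    PrimeSpectrum.nonempty_iff_nontrivial.2 (inferInstanceAs (Nontrivial (R ⊗[k] A)))
  obtain ⟨ψ, hψ⟩ := exists_lift_Spec (tensorToPullback hj hw) _ (range_fromSpecStalk_subset _)
  have hψinj := injective_of_map_genericPoint _ ψ hψ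
  have h1 : CommRingCat.ofHom
      (Algebra.TensorProduct.includeRight (R := k) (A := R) (B := A)).toRingHom ≫ ψ =
      CommRingCat.ofHom σ.toRingHom := by
    apply Spec.map_injective
    rw [← cancel_mono j, hσ, ← hψ, Spec.map_comp, Category.assoc, Category.assoc,
      tensorToPullback_fst]
  have h2 : CommRingCat.ofHom Algebra.TensorProduct.includeLeftRingHom ≫ ψ =
      CommRingCat.ofHom τ.toRingHom := by
    apply Spec.map_injective
    rw [← cancel_mono w, hτ, ← hψ, Spec.map_comp, Category.assoc, Category.assoc,
      tensorToPullback_snd]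
  have h3 : ∀ z : R ⊗[k] A, Algebra.TensorProduct.productMap τ σ z = ψ.hom z := by
    intro z
    induction z with
    | zero => simp
    | add x y hx hy => rw [map_add, map_add, hx, hy]
    | tmul x a =>
      have e1 : ψ.hom (1 ⊗ₜ a) = σ a := congr($h1 a)
      have e2 : ψ.hom (x ⊗ₜ 1) = τ x := congr($h2 x)
      have : (x ⊗ₜ[k] a : R ⊗[k] A) = (x ⊗ₜ 1) * (1 ⊗ₜ a) := by simp
      rw [this, map_mul, map_mul, e1, e2]
      simp
  intro z w hzw
  rw [h3, h3] at hzw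
  exact hψinj hzw

end

section
variable {k : Type u} [Field k] {C : Scheme.{u}} {f : C ⟶ Spec (.of k)}
  {A : Type u} [CommRing A] [Algebra k A] {j : Spec (.of A) ⟶ C}
  [IsOpenImmersion j] [Nontrivial A]

theorem productMap_injective_of_pullback
    (hj : j ≫ f = Spec.map (CommRingCat.ofHom (algebraMap k A)))
    {P : Scheme.{u}} [IsIntegral P] {p : P ⟶ Spec (.of k)} [IsIntegral (pullback f p)]
    [Algebra k P.functionField] [Algebra k (pullback f p).functionField]
    (hP : Spec.map (CommRingCat.ofHom (algebraMap k P.functionField)) =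
      P.fromSpecStalk (genericPoint P) ≫ p)
    (τ : P.functionField →ₐ[k] (pullback f p).functionField)
    (hτ : Spec.map (CommRingCat.ofHom τ.toRingHom) ≫ P.fromSpecStalk (genericPoint P) =
      (pullback f p).fromSpecStalk (genericPoint _) ≫ pullback.snd f p)
    (σ : A →ₐ[k] (pullback f p).functionField)
    (hσ : Spec.map (CommRingCat.ofHom σ.toRingHom) ≫ j =
      (pullback f p).fromSpecStalk (genericPoint _) ≫ pullback.fst f p) :
    Function.Injective (Algebra.TensorProduct.productMap τ σ) := by
  obtain ⟨_, ⟨W, hW : IsAffineOpen W, rfl⟩, hxW, -⟩ :=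
    P.isBasis_affineOpens.exists_subset_of_mem_open (Set.mem_univ (genericPoint P)) isOpen_univ
  have hne : Nonempty W := ⟨_, hxW⟩
  let φ : CommRingCat.of k ⟶ Γ(P, W) := Spec.preimage (hW.fromSpec ≫ p)
  have hφ : Spec.map φ = hW.fromSpec ≫ p := Spec.map_preimage _
  let : Algebra k Γ(P, W) := φ.hom.toAlgebra
  have hgerm : Spec.map (P.germToFunctionField W) ≫ hW.fromSpec =
      P.fromSpecStalk (genericPoint P) := hW.fromSpecStalk_eq_fromSpecStalk hxW
  have hkR : φ ≫ P.germToFunctionField W = CommRingCat.ofHom (algebraMap k P.functionField) := by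
    apply Spec.map_injective
    rw [Spec.map_comp, hφ, hP, ← hgerm, Category.assoc]
  have : IsScalarTower k Γ(P, W) P.functionField :=
    IsScalarTower.of_algebraMap_eq fun x => (congr($hkR x)).symm
  have : IsFractionRing Γ(P, W) P.functionField :=
    functionField_isFractionRing_of_isAffineOpen P W hW
  apply productMap_injective_of_isFractionRing (R := Γ(P, W))
  refine productMap_injective_of_isOpenImmersion hj (w := hW.fromSpec) hφ.symm _ ?_ _ hσ
  rw [← hτ, ← hgerm, ← Category.assoc, ← Spec.map_comp]
  rfl

end

/-- A ring homomorphism compatible with the structure morphisms to `Spec k` is a homomorphism of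
`k`-algebras. -/
theorem exists_algHom_of_Spec_map {k : Type u} {A L : CommRingCat.{u}} [CommRing k]
    [Algebra k A] [Algebra k L] (σ : A ⟶ L) (h : Spec.map σ ≫
      Spec.map (CommRingCat.ofHom (algebraMap k A)) =
      Spec.map (CommRingCat.ofHom (algebraMap k L))) :
    ∃ σ' : A →ₐ[k] L, CommRingCat.ofHom σ'.toRingHom = σ := by
  rw [← Spec.map_comp] at h
  have h' := Spec.map_injective h
  exact ⟨{ σ.hom with commutes' := fun x => congr($h' x) }, rfl⟩

section
variable {k : Type u} [Field k] {C : Scheme.{u}} {f : C ⟶ Spec (.of k)}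
  {A : Type u} [CommRing A] [Algebra k A] {j : Spec (.of A) ⟶ C}
  [IsOpenImmersion j] [Nontrivial A]

theorem exists_algHom_functionField_pullback
    (hj : j ≫ f = Spec.map (CommRingCat.ofHom (algebraMap k A)))
    {P : Scheme.{u}} [IsIntegral P] {p : P ⟶ Spec (.of k)} [IsIntegral (pullback f p)]
    [IsIntegral C] [Surjective f] [Surjective p]
    [Algebra k P.functionField] [Algebra k (pullback f p).functionField]
    (hP : Spec.map (CommRingCat.ofHom (algebraMap k P.functionField)) =
      P.fromSpecStalk (genericPoint P) ≫ p)
    (hX : Spec.map (CommRingCat.ofHom (algebraMap k (pullback f p).functionField)) =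
      (pullback f p).fromSpecStalk (genericPoint _) ≫ pullback.fst f p ≫ f) :
    ∃ (τ : P.functionField →ₐ[k] (pullback f p).functionField)
      (σ : A →ₐ[k] (pullback f p).functionField),
      Spec.map (CommRingCat.ofHom τ.toRingHom) ≫ P.fromSpecStalk (genericPoint P) =
        (pullback f p).fromSpecStalk (genericPoint _) ≫ pullback.snd f p ∧
      Spec.map (CommRingCat.ofHom σ.toRingHom) ≫ j =
        (pullback f p).fromSpecStalk (genericPoint _) ≫ pullback.fst f p ∧
      Function.Injective (Algebra.TensorProduct.productMap τ σ) := by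
  have : Nonempty (Spec (.of A)) := PrimeSpectrum.nonempty_iff_nontrivial.2 ‹_›
  have h1 : pullback.fst f p (genericPoint _) = genericPoint _ := genericPoint_of_surjective _
  have h2 : pullback.snd f p (genericPoint _) = genericPoint _ := genericPoint_of_surjective _
  let c : Spec (pullback f p).functionField := IsLocalRing.closedPoint (pullback f p).functionField
  have hc : (pullback f p).fromSpecStalk (genericPoint _) c = genericPoint ↥(pullback f p) :=
    Scheme.fromSpecStalk_closedPoint
  obtain ⟨τ, hτ⟩ := exists_stalk_hom
    ((pullback f p).fromSpecStalk (genericPoint _) ≫ pullback.snd f p) (genericPoint P) (by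
      change (_ ≫ pullback.snd f p) c = _
      rw [Scheme.Hom.comp_apply, hc, h2])
  obtain ⟨σ, hσ⟩ := exists_lift_Spec j
    ((pullback f p).fromSpecStalk (genericPoint _) ≫ pullback.fst f p) (by
      rintro _ ⟨x, rfl⟩
      obtain rfl : x = c := Subsingleton.elim (α := PrimeSpectrum (pullback f p).functionField) _ _
      rw [Scheme.Hom.comp_apply, hc, h1]
      exact mem_range_of_isOpenImmersion j)
  obtain ⟨τ, rfl⟩ := exists_algHom_of_Spec_map (k := k) τ (by
    rw [hP, hX, pullback.condition, reassoc_of% hτ])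
  obtain ⟨σ, rfl⟩ := exists_algHom_of_Spec_map (A := .of A) (k := k) σ (by
    erw [hX, ← hj, reassoc_of% hσ])
  exact ⟨τ, σ, hτ, hσ, productMap_injective_of_pullback hj hP τ hτ σ hσ⟩

end

section
variable {k : Type u} [Field k] {C : Scheme.{u}} {f : C ⟶ Spec (.of k)}
  {A : Type u} [CommRing A] [Algebra k A] {j : Spec (.of A) ⟶ C}
  [IsOpenImmersion j] [Nontrivial A] [LocallyOfFiniteType f] [GeometricallyIntegral f]

variable (f) in
theorem exists_isGenericFamily (hj : j ≫ f = Spec.map (CommRingCat.ofHom (algebraMap k A)))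
    (r : ℕ) : ∃ σ : Fin r → A →ₐ[k] genericField f r, IsGenericFamily σ ∧
      ∀ i, Spec.map (CommRingCat.ofHom (σ i).toRingHom) ≫ j = genericPt f r ≫ powerProj f r i := by
  induction r with
  | zero => exact ⟨fun i => i.elim0, fun i => i.elim0, fun i => i.elim0⟩
  | succ r ih =>
    obtain ⟨σ, hσ, hσj⟩ := ih
    have hI : IsIntegral (pullback f (power f r).hom) :=
      inferInstanceAs (IsIntegral (power f (r + 1)).left)
    have : IsIntegral C := GeometricallyIntegral.isIntegral_of_subsingleton f
    have : Surjective (power f r).hom :=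
      ⟨fun x => ⟨genericPoint _, Subsingleton.elim (α := PrimeSpectrum k) _ _⟩⟩
    let halg : Algebra k (pullback f (power f r).hom).functionField :=
      (toGenericField f (r + 1)).toAlgebra
    obtain ⟨τ, σ₀, hτ, hσ₀, hinj⟩ := exists_algHom_functionField_pullback hj
      (Spec_map_toGenericField r) (Spec_map_toGenericField (f := f) (r + 1))
    refine ⟨_, hσ.cons τ σ₀ hinj, ?_⟩
    refine Fin.cases hσ₀ fun i => ?_
    have h : Spec.map (CommRingCat.ofHom (σ i).toRingHom ≫ CommRingCat.ofHom τ.toRingHom) ≫ j =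
        (pullback f (power f r).hom).fromSpecStalk (genericPoint _) ≫
          pullback.snd f (power f r).hom ≫ powerProj f r i := by
      rw [Spec.map_comp, Category.assoc, hσj, ← reassoc_of% hτ]
      rfl
    exact h

end

theorem comap_prod_pow_of_bijective {R S ι : Type*} [CommRing R] [CommRing S] [Fintype ι]
    (φ : R →+* S) (hφ : Function.Bijective φ) (J : ι → Ideal S) (m : ι → ℕ) :
    (∏ i, J i ^ m i).comap φ = ∏ i, (J i).comap φ ^ m i := by
  have h : ∀ I : Ideal S, I.comap φ = I.map (RingEquiv.ofBijective φ hφ).symm := fun I =>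
    (Ideal.map_symm (I := I) (RingEquiv.ofBijective φ hφ)).symm
  simp only [h, ← Ideal.mapHom_apply, map_prod, map_pow]

theorem ker_inv_comp_appTop {Z X : Scheme.{u}} {B : CommRingCat.{u}} (u : Spec B ⟶ X)
    [IsOpenImmersion u] (h : Z ⟶ Spec B) {g : Z ⟶ X} (hg : h ≫ u = g) [QuasiCompact g] :
    RingHom.ker ((Scheme.ΓSpecIso B).inv ≫ h.appTop).hom =
      (g.ker.ideal ⟨u ''ᵁ ⊤, (isAffineOpen_top _).image_of_isOpenImmersion _⟩).comap
        ((Scheme.ΓSpecIso B).inv ≫ (u.appIso ⊤).inv).hom := by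
  have hr : Set.range g ⊆ Set.range u := by
    rw [← hg]
    exact Set.range_comp_subset_range h u
  have hl : IsOpenImmersion.lift u g hr = h := by
    rw [← cancel_mono u, IsOpenImmersion.lift_fac, hg]
  have hp := IsOpenImmersion.isPullback_lift_id g u hr
  rw [hl] at hp
  have : QuasiCompact h := MorphismProperty.of_isPullback hp.flip inferInstance
  have := Scheme.ker_ideal_of_isPullback_of_isOpenImmersion g h (𝟙 _) u hp
    ⟨⊤, isAffineOpen_top _⟩
  rw [Scheme.Hom.ker_apply] at this
  rw [CommRingCat.hom_comp, CommRingCat.hom_comp, ← Ideal.comap_comap, ← this, RingHom.comap_ker]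
  rfl

theorem ker_subscheme_prod {X : Scheme.{u}} {B F : CommRingCat.{u}} (u : Spec B ⟶ X)
    [IsOpenImmersion u] {ι : Type*} [Fintype ι] (e : ι → (B ⟶ F)) (m : ι → ℕ)
    (x : ι → (Spec F ⟶ X)) (hx : ∀ i, Spec.map (e i) ≫ u = x i) [∀ i, QuasiCompact (x i)]
    (h : (∏ i, (x i).ker ^ m i).subscheme ⟶ Spec B)
    (hh : h ≫ u = (∏ i, (x i).ker ^ m i).subschemeι) :
    RingHom.ker ((Scheme.ΓSpecIso B).inv ≫ h.appTop).hom = ∏ i, RingHom.ker (e i).hom ^ m i := by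
  have hprod : ∀ (s : Finset ι) W, (∏ i ∈ s, (x i).ker ^ m i).ideal W =
      ∏ i ∈ s, (x i).ker.ideal W ^ m i := fun s W => by
    classical
    induction s using Finset.induction_on with
    | empty => simp
    | insert a s ha ih =>
      rw [Finset.prod_insert ha, Finset.prod_insert ha, ← ih]
      rfl
  rw [ker_inv_comp_appTop u h hh, Scheme.IdealSheafData.ker_subschemeι, hprod,
    comap_prod_pow_of_bijective _ (ConcreteCategory.bijective_of_isIso _)]
  refine Finset.prod_congr rfl fun i _ => ?_
  rw [← ker_inv_comp_appTop u (Spec.map (e i)) (hx i)]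
  congr 1
  rw [← Scheme.ΓSpecIso_inv_naturality]
  rw [CommRingCat.hom_comp]
  exact RingHom.ker_comp_of_injective _
    (ConcreteCategory.bijective_of_isIso (Scheme.ΓSpecIso F).inv).1

/-- The subscheme cut out by `∏ ker (x i) ^ m i` factors through any open containing the images. -/
theorem range_subschemeι_prod_subset {X Z Y : Scheme.{u}} (u : Y ⟶ X) {ι : Type*} [Fintype ι]
    (m : ι → ℕ) (hm : ∀ i, 0 < m i) (x : ι → (Z ⟶ X)) [∀ i, IsClosedImmersion (x i)]
    (hx : ∀ i, Set.range (x i) ⊆ Set.range u) :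
    Set.range (∏ i, (x i).ker ^ m i).subschemeι ⊆ Set.range u := by
  rw [Scheme.IdealSheafData.range_subschemeι]
  suffices H : ∀ s : Finset ι, ((∏ i ∈ s, (x i).ker ^ m i).support : Set X) ⊆ Set.range u from
    H _
  intro s
  classical
  induction s using Finset.induction_on with
  | empty => exact Set.empty_subset _
  | insert a s ha ih =>
    rw [Finset.prod_insert ha, Scheme.IdealSheafData.support_mul,
      Scheme.IdealSheafData.support_pow _ _ (hm a).ne', Closeds.coe_sup, Scheme.Hom.support_ker,
      (x a).isClosedEmbedding.isClosed_range.closure_eq]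
    exact Set.union_subset (hx a) ih

section
variable {k : Type u} [Field k] {C : Scheme.{u}} {f : C ⟶ Spec (.of k)}
  {A : Type u} [CommRing A] [Algebra k A] {j : Spec (.of A) ⟶ C}
  [LocallyOfFiniteType f] [GeometricallyIntegral f]
  (hj : j ≫ f = Spec.map (CommRingCat.ofHom (algebraMap k A))) (r : ℕ)

/-- The affine chart `Spec (K ⊗ A)` of `C_K`. -/
noncomputable abbrev chart : Spec (.of (genericField f r ⊗[k] A)) ⟶ baseChange f r :=
  tensorToPullback (w := 𝟙 (Spec (.of (genericField f r)))) hj (Category.id_comp _)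

theorem Spec_map_evalAt_chart (σ : A →ₐ[k] genericField f r) (i : Fin r)
    (hσ : Spec.map (CommRingCat.ofHom σ.toRingHom) ≫ j = genericPt f r ≫ powerProj f r i) :
    Spec.map (CommRingCat.ofHom (evalAt σ : genericField f r ⊗[k] A →+* genericField f r)) ≫
      chart hj r = genericX f r i := by
  apply pullback.hom_ext
  · rw [Category.assoc, tensorToPullback_fst, ← Category.assoc, ← Spec.map_comp, genericX,
      pullback.lift_fst, ← hσ, ← CommRingCat.ofHom_comp]
    congr 3
    ext a
    simp [evalAt_tmul]
  · rw [Category.assoc, tensorToPullback_snd, Category.comp_id, ← Spec.map_comp, genericX,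
      pullback.lift_snd, ← CommRingCat.ofHom_comp, ← Spec.map_id]
    congr 1
    ext a
    simp [evalAt_tmul]

instance (i : Fin r) : IsClosedImmersion (genericX f r i) :=
  have : Subsingleton (Spec (.of (genericField f r))) :=
    inferInstanceAs (Subsingleton (PrimeSpectrum (genericField f r)))
  isClosedImmersion_of_comp_eq_id (pullback.snd f _) (genericX f r i) (pullback.lift_snd _ _ _)

theorem exists_lift_schemeD [IsOpenImmersion j] (m : Fin r → ℕ) (hm : ∀ i, 0 < m i)
    (σ : Fin r → A →ₐ[k] genericField f r)
    (hσ : ∀ i, Spec.map (CommRingCat.ofHom (σ i).toRingHom) ≫ j =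
      genericPt f r ≫ powerProj f r i) :
    ∃ h : schemeD f r m ⟶ Spec (.of (genericField f r ⊗[k] A)),
      h ≫ chart hj r = (idealD f r m).subschemeι ∧
      Function.Surjective ((Scheme.ΓSpecIso _).inv ≫ h.appTop).hom ∧
      RingHom.ker ((Scheme.ΓSpecIso _).inv ≫ h.appTop).hom = ∏ i, pointIdeal (σ i) ^ m i := by
  have hx := fun i => Spec_map_evalAt_chart hj r (σ i) i (hσ i)
  have hr : Set.range (idealD f r m).subschemeι ⊆ Set.range (chart hj r) :=
    range_subschemeι_prod_subset _ m hm (genericX f r) fun i => by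
      rw [← hx]
      rintro _ ⟨y, rfl⟩
      exact ⟨_, rfl⟩
  let h := IsOpenImmersion.lift (chart hj r) (idealD f r m).subschemeι hr
  have hh : h ≫ chart hj r = (idealD f r m).subschemeι := IsOpenImmersion.lift_fac _ _ _
  have : IsClosedImmersion (h ≫ chart hj r) := by rw [hh]; infer_instance
  have : IsClosedImmersion h := .of_comp h (chart hj r)
  refine ⟨h, hh, ?_, ker_subscheme_prod (chart hj r) _ m (genericX f r) hx h hh⟩
  rw [CommRingCat.hom_comp]
  exact (IsClosedImmersion.isAffine_surjective_of_isAffine h).2.comp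
    (ConcreteCategory.bijective_of_isIso (Scheme.ΓSpecIso _).inv).2

theorem isDomain_tensorProduct [IsOpenImmersion j] [Nontrivial A]
    (hj : j ≫ f = Spec.map (CommRingCat.ofHom (algebraMap k A))) :
    IsDomain (genericField f r ⊗[k] A) := by
  have : Nonempty (Spec (.of (genericField f r ⊗[k] A))) :=
    PrimeSpectrum.nonempty_iff_nontrivial.2
      (inferInstanceAs (Nontrivial (genericField f r ⊗[k] A)))
  have : IsIntegral (Spec (.of (genericField f r ⊗[k] A))) :=
    isIntegral_of_isOpenImmersion (chart hj r)
  exact (affine_isIntegral_iff _).1 this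

end

instance final_opens_map {X Y : TopCat.{u}} (h : X ⟶ Y) : (Opens.map h).Final := by
  refine ⟨fun V => ?_⟩
  have : Nonempty (StructuredArrow V (Opens.map h)) := ⟨.mk (Y := ⊤) (homOfLE le_top)⟩
  refine zigzag_isConnected fun a b => ?_
  let t : StructuredArrow V (Opens.map h) := .mk (Y := ⊤) (homOfLE le_top)
  exact (Zigzag.of_hom (StructuredArrow.homMk (homOfLE le_top) (Subsingleton.elim _ _) : a ⟶ t)).trans
    (Zigzag.of_inv (StructuredArrow.homMk (homOfLE le_top) (Subsingleton.elim _ _) : b ⟶ t))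

/-- The structure sheaf of `X`, as a module over itself. -/
noncomputable abbrev unitModule (X : Scheme.{u}) : X.Modules := SheafOfModules.unit X.ringCatSheaf

theorem exists_pullback_unitModule_iso {Y Z : Scheme.{u}} (h : Y ⟶ Z) :
    ∃ e : (Scheme.Modules.pullback h).obj (unitModule Z) ≅ unitModule Y,
      ∀ a : Γ(Z, ⊤), (e.hom.app ⊤).hom ((((Scheme.Modules.pullbackPushforwardAdjunction h).unit.app
        (unitModule Z)).app ⊤).hom a) = h.appTop.hom a := by
  have : (Opens.map h.base).Final := final_opens_map _
  let φ := h.toRingCatSheafHom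
  have h1 : (SheafOfModules.pushforward.{u} φ).IsRightAdjoint :=
    inferInstanceAs (Scheme.Modules.pushforward h).IsRightAdjoint
  let e : (SheafOfModules.pullback φ).obj (SheafOfModules.unit Z.ringCatSheaf) ⟶
    (SheafOfModules.unit Y.ringCatSheaf) := SheafOfModules.pullbackObjUnitToUnit φ
  have he : IsIso e := by
    exact SheafOfModules.instIsIsoPullbackObjUnitToUnitOfFinal φ
  have := SheafOfModules.pullbackPushforwardAdjunction_homEquiv_pullbackObjUnitToUnit φ
  rw [Adjunction.homEquiv_unit] at this
  refine ⟨@asIso Y.Modules _ _ _ e he, fun a => ?_⟩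
  exact congr(Scheme.Modules.Hom.app $this ⊤ a)

/-- If `L` is trivialized along the open immersion `j`, then so is its pullback along any morphism
factoring through `j`, compatibly with the pullback of sections. -/
theorem exists_pullback_iso_unitModule {X Y Z : Scheme.{u}} (h : Y ⟶ Z) (j : Z ⟶ X)
    [IsOpenImmersion j] {g : Y ⟶ X} (hg : h ≫ j = g) (L : X.Modules)
    (ψ : L.restrict j ≅ unitModule Z) :
    ∃ Θ : (Scheme.Modules.pullback g).obj L ≅ unitModule Y,
      ∀ s : Γ(L, ⊤), (Θ.hom.app ⊤).hom
          ((((Scheme.Modules.pullbackPushforwardAdjunction g).unit.app L).app ⊤).hom s) =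
        h.appTop.hom ((ψ.hom.app ⊤).hom
          ((((Scheme.Modules.restrictAdjunction j).unit.app L).app ⊤).hom s)) := by
  subst hg
  obtain ⟨e, he⟩ := exists_pullback_unitModule_iso h
  let adj := ((Scheme.Modules.restrictAdjunction j).comp
    (Scheme.Modules.pullbackPushforwardAdjunction h)).ofNatIsoRight
      (Scheme.Modules.pushforwardComp h j)
  let adj' := Scheme.Modules.pullbackPushforwardAdjunction (h ≫ j)
  refine ⟨(adj'.leftAdjointUniq adj).app L ≪≫ (Scheme.Modules.pullback h).mapIso ψ ≪≫ e,
    fun s => ?_⟩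
  have h1 := Adjunction.unit_leftAdjointUniq_hom_app adj' adj L
  have h2 : (((adj'.leftAdjointUniq adj).hom.app L).app ⊤).hom ((adj'.unit.app L).app ⊤ s) =
      (((Scheme.Modules.pullbackPushforwardAdjunction h).unit.app (L.restrict j)).app ⊤).hom
        ((((Scheme.Modules.restrictAdjunction j).unit.app L).app ⊤).hom s) :=
    congr(Scheme.Modules.Hom.app $h1 ⊤ s)
  have h3 := (Scheme.Modules.pullbackPushforwardAdjunction h).unit.naturality ψ.hom
  have h4 : ∀ t, (((Scheme.Modules.pullbackPushforwardAdjunction h).unit.app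
      (unitModule Z)).app ⊤).hom ((ψ.hom.app ⊤).hom t) =
      (((Scheme.Modules.pullback h).map ψ.hom).app ⊤).hom
       ((((Scheme.Modules.pullbackPushforwardAdjunction h).unit.app (L.restrict j)).app ⊤).hom t) :=
    fun t => congr(Scheme.Modules.Hom.app $h3 ⊤ t)
  refine Eq.trans ?_ (he _)
  refine Eq.trans ?_ (congrArg (e.hom.app ⊤).hom (h4 _).symm)
  exact congrArg (fun t => (e.hom.app ⊤).hom ((((Scheme.Modules.pullback h).map ψ.hom).app ⊤).hom t))
    h2

theorem restrict_eq_zero_of_restrict_eq_zero {X Z : Scheme.{u}} [IsIntegral X] {L : X.Modules}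
    (i : Z ⟶ X) [IsOpenImmersion i] [Nonempty Z] (φ : L.restrict i ≅ unitModule Z)
    (W : X.Opens) [Nonempty W] (s : Γ(L, ⊤))
    (hs : (L.presheaf.map (homOfLE le_top : W ⟶ ⊤).op).hom s = 0) :
    (L.presheaf.map (homOfLE le_top : i ''ᵁ ⊤ ⟶ ⊤).op).hom s = 0 := by
  let W' : Z.Opens := i ⁻¹ᵁ W
  have hI : IsIntegral Z := isIntegral_of_isOpenImmersion i
  have hW' : Nonempty W' := by
    obtain ⟨w⟩ := ‹Nonempty W›
    obtain ⟨_, hxW, z, rfl⟩ := nonempty_preirreducible_inter W.isOpen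
      i.isOpenEmbedding.isOpen_range ⟨w.1, w.2⟩ (Set.range_nonempty i)
    exact ⟨⟨z, hxW⟩⟩
  let t : Γ(L.restrict i, ⊤) := (L.presheaf.map (homOfLE le_top : i ''ᵁ ⊤ ⟶ ⊤).op).hom s
  have h1 : ((L.restrict i).presheaf.map (homOfLE le_top : W' ⟶ ⊤).op).hom t = 0 := by
    have hle : i ''ᵁ W' ≤ W := i.image_preimage_le W
    have e : L.presheaf.map (homOfLE le_top : i ''ᵁ ⊤ ⟶ ⊤).op ≫
        L.presheaf.map (homOfLE (i.image_mono le_top) : i ''ᵁ W' ⟶ i ''ᵁ ⊤).op =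
        L.presheaf.map (homOfLE le_top : W ⟶ ⊤).op ≫ L.presheaf.map (homOfLE hle).op := by
      rw [← Functor.map_comp, ← Functor.map_comp]
      rfl
    have := congr($e s)
    refine Eq.trans this ?_
    exact (congrArg (L.presheaf.map (homOfLE hle).op).hom hs).trans (map_zero _)
  have h2 : (Z.presheaf.map (homOfLE le_top : W' ⟶ ⊤).op).hom ((φ.hom.app ⊤).hom t) = 0 := by
    have := φ.hom.mapPresheaf.naturality (homOfLE le_top : W' ⟶ ⊤).op
    have := congr($this t)
    refine Eq.trans this.symm ?_
    exact (congrArg (φ.hom.app W').hom h1).trans (map_zero _)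
  have h3 : (φ.hom.app ⊤).hom t = (0 : Γ(Z, ⊤)) :=
    map_injective_of_isIntegral Z (homOfLE le_top : W' ⟶ ⊤) (h2.trans (map_zero _).symm)
  have h4 : (φ.inv.app ⊤).hom ((φ.hom.app ⊤).hom t) = t := by
    have := φ.hom_inv_id
    exact congr(Scheme.Modules.Hom.app $this ⊤ t)
  refine Eq.trans h4.symm ?_
  exact (congrArg (φ.inv.app ⊤).hom h3).trans (map_zero _)

theorem eq_zero_of_restrict_eq_zero {X : Scheme.{u}} [IsIntegral X] {L : X.Modules}
    (hL : IsInvertibleSheaf L) (W : X.Opens) [Nonempty W] (s : Γ(L, ⊤))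
    (hs : (L.presheaf.map (homOfLE le_top : W ⟶ ⊤).op).hom s = 0) : s = 0 := by
  choose U hxU hU using hL
  let S : TopCat.Sheaf Ab X := ⟨L.presheaf, L.isSheaf⟩
  refine S.eq_of_locally_eq' (fun x => (U x).ι ''ᵁ ⊤) ⊤ (fun x => homOfLE le_top) ?_ s 0
    fun x => ?_
  · intro x _
    rw [Opens.mem_iSup]
    exact ⟨x, by simpa using hxU x⟩
  · have : Nonempty (U x) := ⟨⟨x, hxU x⟩⟩
    refine (restrict_eq_zero_of_restrict_eq_zero (U x).ι (hU x).some W s hs).trans ?_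
    exact (map_zero (L.presheaf.map (homOfLE le_top : (U x).ι ''ᵁ ⊤ ⟶ ⊤).op).hom).symm

/-- An invertible sheaf is trivial on a nonempty affine open. -/
theorem exists_affine_trivialization {X : Scheme.{u}} [Nonempty X] {L : X.Modules}
    (hL : IsInvertibleSheaf L) :
    ∃ (A : CommRingCat.{u}) (j : Spec A ⟶ X) (_ : IsOpenImmersion j),
      Nontrivial A ∧ Nonempty (L.restrict j ≅ unitModule (Spec A)) := by
  obtain ⟨x⟩ := ‹Nonempty X›
  obtain ⟨U, hxU, ⟨φ⟩⟩ := hL x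
  obtain ⟨_, ⟨W, hW : IsAffineOpen W, rfl⟩, hxW, -⟩ :=
    U.toScheme.isBasis_affineOpens.exists_subset_of_mem_open (Set.mem_univ ⟨x, hxU⟩) isOpen_univ
  refine ⟨Γ(U, W), hW.fromSpec ≫ U.ι, inferInstance, ?_, ⟨?_⟩⟩
  · have : Nonempty W := ⟨_, hxW⟩
    infer_instance
  · exact (Scheme.Modules.restrictFunctorComp hW.fromSpec U.ι).app L ≪≫
      (Scheme.Modules.restrictFunctor hW.fromSpec).mapIso φ ≪≫
      Scheme.Modules.restrictUnitIso hW.fromSpec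

section LinearAlgebra

variable {k K A V E S : Type*} [Field k] [Field K] [Algebra k K] [CommRing A] [Algebra k A]
  [AddCommGroup V] [Module k V] [FiniteDimensional k V] [AddCommGroup E] [Module K E]
  [CommRing S]

/-- A linear map `K ⊗ V → E` which is modelled on `K ⊗ V → K ⊗ A → (K ⊗ A) / J` is injective or
surjective as soon as this holds for all families of linearly independent elements of `A`. -/
theorem injective_or_surjective_of_model (Φ : K ⊗[k] V →ₗ[K] E) (π : K ⊗[k] A →+* S) (θ : E →+ S)
    (hθ : Function.Injective θ) (hπ : Function.Surjective π) (α : V →ₗ[k] A)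
    (hα : Function.Injective α) (H : ∀ c v, θ (Φ (c ⊗ₜ v)) = π (c ⊗ₜ α v))
    (hJ : ∀ (n : ℕ) (a : Fin n → A), LinearIndependent k a →
      (∀ y : Fin n → K, ∑ j, y j ⊗ₜ a j ∈ RingHom.ker π → y = 0) ∨
        ∀ x : K ⊗[k] A, ∃ y : Fin n → K, x - ∑ j, y j ⊗ₜ a j ∈ RingHom.ker π) :
    Function.Injective Φ ∨ Function.Surjective Φ := by
  let b := Module.finBasis k V
  have hlin : LinearIndependent k (α ∘ b) := b.linearIndependent.map' α (LinearMap.ker_eq_bot.2 hα)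
  have key : ∀ y : Fin (Module.finrank k V) → K, θ (Φ (∑ i, y i ⊗ₜ b i)) =
      π (∑ i, y i ⊗ₜ (α ∘ b) i) := fun y => by simp [map_sum, H]
  refine (hJ _ _ hlin).imp (fun h => ?_) fun h => ?_
  · rw [injective_iff_map_eq_zero]
    intro z hz
    obtain ⟨y, rfl⟩ : ∃ y : Fin (Module.finrank k V) → K, z = ∑ i, y i ⊗ₜ b i := by
      refine ⟨fun i => (b.baseChange K).repr z i, ?_⟩
      conv_lhs => rw [← (b.baseChange K).sum_repr z]
      refine Finset.sum_congr rfl fun i _ => ?_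
      rw [Module.Basis.baseChange_apply, TensorProduct.smul_tmul', smul_eq_mul, mul_one]
    have : y = 0 := h y (by rw [RingHom.mem_ker, ← key, hz, map_zero])
    simp [this]
  · intro e
    obtain ⟨x, hx⟩ := hπ (θ e)
    obtain ⟨y, hy⟩ := h x
    refine ⟨_, hθ ((key y).trans ?_)⟩
    rw [RingHom.mem_ker, map_sub, sub_eq_zero] at hy
    rw [← hy, hx]

end LinearAlgebra

theorem baseToSections_comp_Spec_map {R B : Type u} [CommRing R] [CommRing B] (φ : R →+* B)
    {X : Scheme.{u}} {h : X ⟶ Spec (.of B)} {p : X ⟶ Spec (.of R)}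
    (hp : h ≫ Spec.map (CommRingCat.ofHom φ) = p) (c : R) :
    baseToSections p c = ((Scheme.ΓSpecIso (.of B)).inv ≫ h.appTop).hom (φ c) := by
  subst hp
  rw [baseToSections, Scheme.Hom.comp_appTop, ← Scheme.ΓSpecIso_inv_naturality_assoc]
  rfl

theorem appTop_baseToSections {R : Type u} [CommRing R] {X Y : Scheme.{u}} (j : Y ⟶ X)
    {p : X ⟶ Spec (.of R)} {q : Y ⟶ Spec (.of R)} (h : j ≫ p = q) (c : R) :
    j.appTop.hom (baseToSections p c) = baseToSections q c := by
  subst h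
  rw [baseToSections, baseToSections, Scheme.Hom.comp_appTop]
  rfl

section LocalSection

variable {k A : Type u} [CommRing k] [CommRing A] [Algebra k A] {C : Scheme.{u}}
  {f : C ⟶ Spec (.of k)} {j : Spec (.of A) ⟶ C} [IsOpenImmersion j] {L : C.Modules}

/-- The function on `Spec A` corresponding to a global section of `L` under a trivialization of `L`
along `j : Spec A ⟶ C`. -/
noncomputable def localSection (hj : j ≫ f = Spec.map (CommRingCat.ofHom (algebraMap k A)))
    (ψ : L.restrict j ≅ unitModule (Spec (.of A))) : GlobalSections f L →ₗ[k] A where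
  toFun s := (Scheme.ΓSpecIso (.of A)).hom.hom ((ψ.hom.app ⊤).hom
    ((((Scheme.Modules.restrictAdjunction j).unit.app L).app ⊤).hom s))
  map_add' s t := by
    have h1 := map_add (((Scheme.Modules.restrictAdjunction j).unit.app L).app ⊤).hom s t
    have h2 := (congrArg (ψ.hom.app ⊤).hom h1).trans (map_add (ψ.hom.app ⊤).hom _ _)
    exact (congrArg (Scheme.ΓSpecIso (.of A)).hom.hom h2).trans (map_add _ _ _)
  map_smul' c s := by
    have h1 := Scheme.Modules.Hom.app_smul ((Scheme.Modules.restrictAdjunction j).unit.app L)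
      (U := ⊤) (baseToSections f c) s
    let t : Γ(L.restrict j, ⊤) := (((Scheme.Modules.restrictAdjunction j).unit.app L).app ⊤).hom s
    have h2 := Scheme.Modules.Hom.app_smul ψ.hom (U := ⊤) (j.appTop.hom (baseToSections f c)) t
    have h3 : j.appTop.hom (baseToSections f c) =
        (Scheme.ΓSpecIso (.of A)).inv.hom (algebraMap k A c) := by
      rw [appTop_baseToSections j rfl, baseToSections_comp_Spec_map (algebraMap k A)
        (h := 𝟙 _) (by rw [hj, Category.id_comp])]
      simp
    let x : Γ(Spec (.of A), ⊤) := (ψ.hom.app ⊤).hom t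
    have h4 : (Scheme.ΓSpecIso (.of A)).hom.hom (j.appTop.hom (baseToSections f c) * x) =
        c • (Scheme.ΓSpecIso (.of A)).hom.hom x := by
      rw [map_mul, h3, Algebra.smul_def]
      congr 1
      exact congr($((Scheme.ΓSpecIso (.of A)).inv_hom_id) _)
    refine Eq.trans ?_ h4
    exact congrArg (Scheme.ΓSpecIso (.of A)).hom.hom ((congrArg (ψ.hom.app ⊤).hom h1).trans h2)

theorem localSection_injective [IsIntegral C] [Nontrivial A] (hL : IsInvertibleSheaf L)
    (hj : j ≫ f = Spec.map (CommRingCat.ofHom (algebraMap k A)))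
    (ψ : L.restrict j ≅ unitModule (Spec (.of A))) : Function.Injective (localSection hj ψ) := by
  rw [injective_iff_map_eq_zero]
  intro s hs
  have h1 := (ConcreteCategory.bijective_of_isIso (Scheme.ΓSpecIso (.of A)).hom).1
    (hs.trans (map_zero _).symm)
  have h2 : (((Scheme.Modules.restrictAdjunction j).unit.app L).app ⊤).hom s = 0 := by
    have := (ConcreteCategory.bijective_of_isIso (ψ.hom.app ⊤)).1
    exact this (h1.trans (map_zero (ψ.hom.app ⊤).hom).symm)
  have : Nonempty (Spec (.of A)) := PrimeSpectrum.nonempty_iff_nontrivial.2 ‹_›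
  have : Nonempty (j ''ᵁ j ⁻¹ᵁ ⊤ : C.Opens) := ⟨⟨j (Classical.arbitrary _), by simp⟩⟩
  exact eq_zero_of_restrict_eq_zero hL (j ''ᵁ j ⁻¹ᵁ ⊤) s h2

end LocalSection

theorem ringKrullDim_le_of_isOpenImmersion {C : Scheme.{u}} {A : CommRingCat.{u}} (j : Spec A ⟶ C)
    [IsOpenImmersion j] : ringKrullDim A ≤ topologicalKrullDim C := by
  rw [← PrimeSpectrum.topologicalKrullDim_eq_ringKrullDim]
  exact j.isOpenEmbedding.isInducing.topologicalKrullDim_le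

section

variable {k A : Type u} [Field k] [CommRing A] [Algebra k A] {C : Scheme.{u}}
  {f : C ⟶ Spec (.of k)} {j : Spec (.of A) ⟶ C} [IsOpenImmersion j] {L : C.Modules}
  [LocallyOfFiniteType f] [GeometricallyIntegral f]

/-- Under a trivialization of `L` along `j : Spec A ⟶ C`, the canonical map corresponds to the
quotient map of `K ⊗ A` by the ideal of the divisor. -/
theorem exists_model_canonicalMap
    (hj : j ≫ f = Spec.map (CommRingCat.ofHom (algebraMap k A)))
    (ψ : L.restrict j ≅ unitModule (Spec (.of A))) (V : Submodule k (GlobalSections f L))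
    (r : ℕ) (m : Fin r → ℕ) (hm : ∀ i, 0 < m i) (σ : Fin r → A →ₐ[k] genericField f r)
    (hσ : ∀ i, Spec.map (CommRingCat.ofHom (σ i).toRingHom) ≫ j =
      genericPt f r ≫ powerProj f r i) :
    ∃ (π : genericField f r ⊗[k] A →+* Γ(schemeD f r m, ⊤))
      (θ : H0D f L r m →+ Γ(schemeD f r m, ⊤)),
      Function.Surjective π ∧ RingHom.ker π = ∏ i, pointIdeal (σ i) ^ m i ∧
      Function.Injective θ ∧ ∀ (c : genericField f r) (v : V),
        θ (canonicalMap f L V r m (c ⊗ₜ v)) = π (c ⊗ₜ localSection hj ψ v) := by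
  obtain ⟨h, hh, hsurj, hker⟩ := exists_lift_schemeD hj r m hm σ hσ
  let ι : A →+* genericField f r ⊗[k] A :=
    (Algebra.TensorProduct.includeRight (R := k) (A := genericField f r) (B := A)).toRingHom
  have hC : (h ≫ Spec.map (CommRingCat.ofHom ι)) ≫ j = toC f r m := by
    rw [toC, ← hh, Category.assoc, Category.assoc, tensorToPullback_fst]
  have hK : h ≫ Spec.map (CommRingCat.ofHom Algebra.TensorProduct.includeLeftRingHom) =
      toSpecK f r m := by
    rw [toSpecK, ← hh, Category.assoc, tensorToPullback_snd, Category.comp_id]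
  obtain ⟨Θ, hΘ⟩ := exists_pullback_iso_unitModule _ j hC L ψ
  let θ : H0D f L r m →+ Γ(schemeD f r m, ⊤) := (Θ.hom.app ⊤).hom
  refine ⟨_, θ, hsurj, hker, (ConcreteCategory.bijective_of_isIso (Θ.hom.app ⊤)).1,
    fun c v => ?_⟩
  have h1 : canonicalMap f L V r m (c ⊗ₜ v) = c • evalD f L r m v := by
    rw [canonicalMap, LinearMap.liftBaseChange_tmul]
    rfl
  have h2 : ∀ e : H0D f L r m, θ (c • e) = baseToSections (toSpecK f r m) c * θ e := fun e =>
    Scheme.Modules.Hom.app_smul Θ.hom (U := ⊤) (baseToSections (toSpecK f r m) c) e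
  have h3 : θ (evalD f L r m v) = ((Scheme.ΓSpecIso (.of (genericField f r ⊗[k] A))).inv ≫
      h.appTop).hom (1 ⊗ₜ localSection hj ψ v) := by
    refine (hΘ (v : GlobalSections f L)).trans ?_
    have e : (h ≫ Spec.map (CommRingCat.ofHom ι)).appTop = (Scheme.ΓSpecIso (.of A)).hom ≫
        CommRingCat.ofHom ι ≫ (Scheme.ΓSpecIso (.of (genericField f r ⊗[k] A))).inv ≫
          h.appTop := by
      rw [Scheme.Hom.comp_appTop, Scheme.ΓSpecIso_inv_naturality_assoc, Iso.hom_inv_id_assoc]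
    exact congr($e _)
  rw [h1, h2, h3, baseToSections_comp_Spec_map _ hK, ← map_mul]
  congr 1
  change (c ⊗ₜ[k] (1 : A)) * (1 ⊗ₜ localSection hj ψ v) = _
  rw [Algebra.TensorProduct.tmul_mul_tmul, mul_one, one_mul]

end

end GenericDivisor

theorem statement_9 {k : Type u} [Field k] [CharZero k] {C : Scheme.{u}} (f : C ⟶ Spec (.of k))
    [GeometricallyIrreducible f] [IsReduced C] (hqp : GenericDivisor.IsQuasiProjective f)
    (hdim : topologicalKrullDim C = 1)
    (L : C.Modules) (hL : GenericDivisor.IsInvertibleSheaf L)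
    (V : Submodule k (GenericDivisor.GlobalSections f L)) [FiniteDimensional k V]
    (r : ℕ) (m : Fin r → ℕ) (hm : ∀ i, 0 < m i) :
    Function.Injective (GenericDivisor.canonicalMap f L V r m) ∨
      Function.Surjective (GenericDivisor.canonicalMap f L V r m) := by
  have : LocallyOfFiniteType f := hqp.locallyOfFiniteType
  have : GeometricallyIntegral f := GenericDivisor.geometricallyIntegral_of_charZero
  have : IsIntegral C := GenericDivisor.isIntegral_of_geometricallyIrreducible (f := f)
  obtain ⟨A, j, _, hA, ⟨ψ⟩⟩ := GenericDivisor.exists_affine_trivialization hL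
  let φ : CommRingCat.of k ⟶ A := Spec.preimage (j ≫ f)
  let : Algebra k A := φ.hom.toAlgebra
  have hj : j ≫ f = Spec.map (CommRingCat.ofHom (algebraMap k A)) := (Spec.map_preimage _).symm
  have : Nonempty (Spec A) := PrimeSpectrum.nonempty_iff_nontrivial.2 hA
  have : IsDomain A := (affine_isIntegral_iff A).1 (isIntegral_of_isOpenImmersion j)
  have : Algebra.FiniteType k A := by
    have : LocallyOfFiniteType (Spec.map φ) := by
      rw [Spec.map_preimage]
      infer_instance
    exact (HasRingHomProperty.Spec_iff (P := @LocallyOfFiniteType)).1 this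
  have hdimA : ringKrullDim A ≤ 1 :=
    (GenericDivisor.ringKrullDim_le_of_isOpenImmersion j).trans_eq hdim
  obtain ⟨t, ht⟩ := GenericDivisor.exists_forall_isAlgebraic_adjoin k A hdimA
  obtain ⟨σ, hσ, hσj⟩ := GenericDivisor.exists_isGenericFamily f (A := A) hj r
  have : IsDomain (GenericDivisor.genericField f r ⊗[k] A) :=
    GenericDivisor.isDomain_tensorProduct r hj
  obtain ⟨π, θ, hπ, hker, hθ, H⟩ :=
    GenericDivisor.exists_model_canonicalMap (A := A) hj ψ V r m hm σ hσj
  refine GenericDivisor.injective_or_surjective_of_model _ π θ hθ hπ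
    ((GenericDivisor.localSection hj ψ).comp V.subtype)
    ((GenericDivisor.localSection_injective hL hj ψ).comp V.subtype_injective) H
    fun n a ha => ?_
  rw [hker]
  exact GenericDivisor.disjoint_or_codisjoint hσ ht ha m
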